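/- With the generic-elements setup (G abelian, U a G-graded simple algebra finite-dimensional over F = Γ(U)_e, F_U the algebra of generic elements inside Ũ = F̃ ⊗_F U, S_U = Z(M(F_U))_e \ {0}, K_U = Γ(S_U^{-1}F_U)_e identified with a subfield of F̃): the map F̃ ⊗_{K_U} (S_U^{-1}F_U) → Ũ given by λ̃ ⊗ x ↦ λ̃x, for λ̃ ∈ F̃ and x ∈ S_U^{-1}F_U, is an isomorphism of G-graded algebras. -/

import Mathlib

noncomputable section

variable (K : Type*) [Field K]
variable {G : Type*} [CommGroup G] [DecidableEq G]
variable {A : Type*} [NonUnitalNonAssocSemiring A] [Module K A]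
  [SMulCommClass K A A] [IsScalarTower K A A]

/-- `𝒜` is a `G`-grading of the (not necessarily associative or unital) algebra `A`. -/
def IsAlgGrading (𝒜 : G → Submodule K A) : Prop :=
  DirectSum.IsInternal 𝒜 ∧ ∀ (g h : G), ∀ a ∈ 𝒜 g, ∀ b ∈ 𝒜 h, a * b ∈ 𝒜 (g * h)

/-- A submodule is homogeneous if it is the sum of its intersections with the components. -/
def IsHomogSubmodule (𝒜 : G → Submodule K A) (I : Submodule K A) : Prop :=
  I = ⨆ g, I ⊓ 𝒜 g

/-- two-sided ideal of a nonassociative algebra -/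
def IsMulIdeal (I : Submodule K A) : Prop :=
  ∀ a : A, ∀ x ∈ I, a * x ∈ I ∧ x * a ∈ I

/-- graded simple: `A·A ≠ 0` and no nontrivial homogeneous ideals. -/
def IsGradedSimple (𝒜 : G → Submodule K A) : Prop :=
  (∃ a b : A, a * b ≠ 0) ∧
    ∀ I : Submodule K A, IsMulIdeal K I → IsHomogSubmodule K 𝒜 I → I = ⊥ ∨ I = ⊤

/-- The multiplication algebra: the subalgebra of `End_K A` generated by left and right
multiplications. -/
def MultAlg : NonUnitalSubalgebra K (Module.End K A) :=
  NonUnitalAlgebra.adjoin K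
    (Set.range (LinearMap.mulLeft K (A := A)) ∪ Set.range (LinearMap.mulRight K (A := A)))

/-- The homogeneous component of degree `h` of `End_K A`: maps sending `𝒜 g` into `𝒜 (h*g)`. -/
def endGrading (𝒜 : G → Submodule K A) (h : G) : Submodule K (Module.End K A) where
  carrier := {φ | ∀ g : G, ∀ x ∈ 𝒜 g, φ x ∈ 𝒜 (h * g)}
  add_mem' := fun hf hg g x hx => (𝒜 _).add_mem (hf g x hx) (hg g x hx)
  zero_mem' := fun g x hx => (𝒜 _).zero_mem
  smul_mem' := fun c f hf g x hx => (𝒜 _).smul_mem c (hf g x hx)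

/-- The centroid of `A`: endomorphisms commuting with all left and right multiplications. -/
def centroid : Submodule K (Module.End K A) where
  carrier := {φ | ∀ a x : A, φ (a * x) = a * φ x ∧ φ (x * a) = φ x * a}
  add_mem' := by
    intro f g hf hg a x
    refine ⟨?_, ?_⟩ <;>
      simp [LinearMap.add_apply, (hf a x).1, (hg a x).1, (hf a x).2, (hg a x).2, mul_add, add_mul]
  zero_mem' := by intro a x; simp
  smul_mem' := by
    intro c f hf a x
    refine ⟨?_, ?_⟩ <;>
      simp [LinearMap.smul_apply, (hf a x).1, (hf a x).2, mul_smul_comm, smul_mul_assoc]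

/-- The graded centroid `Γ(A)`: the sums of homogeneous centroid elements. -/
def gradedCentroid (𝒜 : G → Submodule K A) : Submodule K (Module.End K A) :=
  ⨆ h : G, centroid K ⊓ endGrading K 𝒜 h

/-- graded polynomial identity, variables indexed by `G × ℕ`, the variable `(g, i)` having
degree `g`. -/
def IsGradedPI (𝒜 : G → Submodule K A) (f : FreeNonUnitalNonAssocAlgebra K (G × ℕ)) : Prop :=
  ∀ v : G × ℕ → A, (∀ p, v p ∈ 𝒜 p.1) → FreeNonUnitalNonAssocAlgebra.lift K v f = 0

/-- ordinary polynomial identity of a not necessarily associative algebra -/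
def IsPI (f : FreeNonUnitalNonAssocAlgebra K ℕ) : Prop :=
  ∀ v : ℕ → A, FreeNonUnitalNonAssocAlgebra.lift K v f = 0

/-- A subset `S` of an associative unital `K`-algebra `B` satisfies an ordinary polynomial
identity. -/
def SatisfiesOrdinaryPI {B : Type*} [Semiring B] [Algebra K B] (S : Set B) : Prop :=
  ∃ f : FreeAlgebra K ℕ, f ≠ 0 ∧
    ∀ v : ℕ → B, (∀ i, v i ∈ S) → FreeAlgebra.lift K v f = 0

/-- isomorphism of `G`-graded algebras -/
def IsGradedIso {B : Type*} [NonUnitalNonAssocSemiring B] [Module K B]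
    (𝒜 : G → Submodule K A) (ℬ : G → Submodule K B) : Prop :=
  ∃ ψ : A ≃ₗ[K] B, (∀ x y : A, ψ (x * y) = ψ x * ψ y) ∧
    ∀ g : G, (𝒜 g).map (ψ : A →ₗ[K] B) = ℬ g

end

noncomputable section

variable (K : Type*) [Field K]

/-- `f` is an ordinary (associative) polynomial identity of the subset `S` of the associative
unital algebra `B`. -/
def IsAssocPIOn {B : Type*} [Semiring B] [Algebra K B] (S : Set B) (f : FreeAlgebra K ℕ) : Prop :=
  ∀ v : ℕ → B, (∀ i, v i ∈ S) → FreeAlgebra.lift K v f = 0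

end

noncomputable section

open TensorProduct

variable (F : Type*) [Field F] {G : Type*} [CommGroup G] [DecidableEq G]
variable (FF : Type*) [Field FF] [Algebra F FF] [Algebra (MvPolynomial (G × ℕ × ℕ) F) FF]
  [IsScalarTower F (MvPolynomial (G × ℕ × ℕ) F) FF]
variable {A : Type*} [NonUnitalNonAssocRing A] [Module F A] [SMulCommClass F A A]
  [IsScalarTower F A A]

/-- the set of generic elements `y_i^g = ∑_j t_{ij}^g ⊗ u_j^g` of `Ũ = FF ⊗ U`,
relative to the choice of bases `bU g` of the homogeneous components. -/
def genericElems (𝒜 : G → Submodule F A) (nU : G → ℕ)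
    (bU : ∀ g : G, Module.Basis (Fin (nU g)) F (𝒜 g)) : Set (FF ⊗[F] A) :=
  {x | ∃ (g : G) (i : Fin (nU g)), x = ∑ j : Fin (nU g),
    (algebraMap (MvPolynomial (G × ℕ × ℕ) F) FF (MvPolynomial.X (g, (i : ℕ), (j : ℕ)))) ⊗ₜ[F]
      ((bU g j : A))}

/-- the algebra of generic elements `F_U`, an `F`-subalgebra of `Ũ = FF ⊗ U`. -/
def genericAlg (𝒜 : G → Submodule F A) (nU : G → ℕ)
    (bU : ∀ g : G, Module.Basis (Fin (nU g)) F (𝒜 g)) : NonUnitalSubalgebra F (FF ⊗[F] A) :=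
  NonUnitalAlgebra.adjoin F (genericElems F FF 𝒜 nU bU)

/-- the degree-`g` component of an `F`-subalgebra `L` of `Ũ = FF ⊗ U`, induced by the grading
of `Ũ`. -/
def subComp (𝒜 : G → Submodule F A) (L : NonUnitalSubalgebra F (FF ⊗[F] A)) (g : G) :
    Submodule F ↥L where
  carrier := {x | (x : FF ⊗[F] A) ∈ (𝒜 g).baseChange FF}
  add_mem' := fun {x y} hx hy => by
    simpa using (((𝒜 g).baseChange FF).restrictScalars F).add_mem hx hy
  zero_mem' := by simp
  smul_mem' := fun c x hx => by
    simpa using (((𝒜 g).baseChange FF).restrictScalars F).smul_mem c hx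

/-- the degree-`e` component `Z(M(F_U))_e` of the center of the multiplication algebra of an
`F`-subalgebra `L` of `Ũ` (applied below to `L = F_U` and to its central localization). -/
def centerMultE (𝒜 : G → Submodule F A) (L : NonUnitalSubalgebra F (FF ⊗[F] A)) :
    Set (Module.End F ↥L) :=
  {m | m ∈ MultAlg F (A := ↥L) ∧ (∀ m' ∈ MultAlg F (A := ↥L), m * m' = m' * m) ∧
    m ∈ endGrading F (subComp F FF 𝒜 L) 1}

end

open TensorProduct


/-! ### Graded projections -/

/-- projections onto the components of a grading with finite support. -/
structure GradProj {K G M : Type*} [Field K] [CommGroup G] [AddCommGroup M] [Module K M]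
    (𝒜 : G → Submodule K M) (p : G → Module.End K M) (S : Finset G) : Prop where
  mem : ∀ g x, p g x ∈ 𝒜 g
  self : ∀ g x, x ∈ 𝒜 g → p g x = x
  other : ∀ g h x, x ∈ 𝒜 g → h ≠ g → p h x = 0
  sum : ∀ x, ∑ g ∈ S, p g x = x

theorem GradProj.homog {K G M : Type*} [Field K] [CommGroup G] [NonUnitalNonAssocRing M]
    [Module K M] {𝒜 : G → Submodule K M} {p : G → Module.End K M} {S : Finset G}
    (hp : GradProj 𝒜 p S) (I : Submodule K M) (hI : ∀ g, ∀ x ∈ I, p g x ∈ I) :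
    IsHomogSubmodule K 𝒜 I := by
  unfold IsHomogSubmodule
  apply le_antisymm
  · intro x hx
    rw [← hp.sum x]
    exact Submodule.sum_mem _ fun g _ =>
      Submodule.mem_iSup_of_mem g ⟨hI g x hx, hp.mem g x⟩
  · exact iSup_le fun g => inf_le_left

theorem GradProj.closed {K G M : Type*} [Field K] [CommGroup G] [NonUnitalNonAssocRing M]
    [Module K M] {𝒜 : G → Submodule K M} {p : G → Module.End K M} {S : Finset G}
    (hp : GradProj 𝒜 p S) (I : Submodule K M) (hI : IsHomogSubmodule K 𝒜 I)
    (g : G) (x : M) (hx : x ∈ I) : p g x ∈ I := by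
  unfold IsHomogSubmodule at hI
  rw [hI] at hx
  induction hx using Submodule.iSup_induction' with
  | mem h x hx =>
    by_cases hgh : g = h
    · subst hgh
      rw [hp.self _ _ hx.2]; exact hx.1
    · rw [hp.other h g x hx.2 hgh]; exact I.zero_mem
  | zero => simp
  | add x y _ _ hx hy => rw [map_add]; exact I.add_mem hx hy

/-- The density-type lemma. -/
theorem key_family {K G A ι : Type*} [Field K] [CommGroup G] [DecidableEq G]
    [NonUnitalNonAssocRing A] [Module K A] [SMulCommClass K A A] [IsScalarTower K A A]
    {𝒜 : G → Submodule K A} {p : G → Module.End K A} {S : Finset G}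
    (hp : GradProj 𝒜 p S) (hs : IsGradedSimple K 𝒜)
    (N : Submodule K (ι →₀ A)) (hN : ∃ n ∈ N, n ≠ 0)
    (hl : ∀ a : A, ∀ n ∈ N, Finsupp.mapRange.linearMap (LinearMap.mulLeft K a) n ∈ N)
    (hr : ∀ a : A, ∀ n ∈ N, Finsupp.mapRange.linearMap (LinearMap.mulRight K a) n ∈ N)
    (hq : ∀ g : G, ∀ n ∈ N, Finsupp.mapRange.linearMap (p g) n ∈ N) :
    ∃ φ : ι → Module.End K A, (∀ i, φ i ∈ centroid K (A := A) ⊓ endGrading K 𝒜 1) ∧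
      (∃ β, φ β = 1) ∧ ∀ v, ∃ n ∈ N, ∀ i, n i = φ i v := by
  classical
  have hex : ∃ k : ℕ, ∃ n ∈ N, n ≠ 0 ∧ n.support.card = k := by
    obtain ⟨n, hn, h0⟩ := hN
    exact ⟨_, n, hn, h0, rfl⟩
  obtain ⟨n0, hn0, hn00, hcard⟩ := Nat.find_spec hex
  have hmin : ∀ n ∈ N, n ≠ 0 → n0.support.card ≤ n.support.card := by
    intro n hn h0
    rw [hcard]
    exact Nat.find_min' hex ⟨n, hn, h0, rfl⟩
  obtain ⟨β, hβ⟩ := Finsupp.support_nonempty_iff.mpr hn00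
  let N' : Submodule K (ι →₀ A) := N ⊓ Finsupp.supported A K (n0.support : Set ι)
  have hN'map : ∀ f : Module.End K A, (∀ n ∈ N, Finsupp.mapRange.linearMap f n ∈ N) →
      ∀ n ∈ N', Finsupp.mapRange.linearMap f n ∈ N' := by
    intro f hf n hn
    refine ⟨hf n hn.1, ?_⟩
    have h2 := hn.2
    rw [SetLike.mem_coe, Finsupp.mem_supported] at h2 ⊢
    intro i hi
    apply h2
    simp only [Finsupp.mapRange.linearMap_apply, Finset.mem_coe, Finsupp.mem_support_iff,
      Finsupp.mapRange_apply] at hi ⊢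
    intro h
    exact hi (by rw [h, map_zero])
  have hinj0 : ∀ n ∈ N', n β = 0 → n = 0 := by
    intro n hn hb
    by_contra h0
    have h1 := hmin n hn.1 h0
    have h2 := hn.2
    rw [SetLike.mem_coe, Finsupp.mem_supported] at h2
    have h3 : n.support ⊂ n0.support := by
      refine Finset.ssubset_iff_subset_ne.mpr ⟨by exact_mod_cast h2, ?_⟩
      intro he
      rw [← he] at hβ
      exact (Finsupp.mem_support_iff.mp hβ) hb
    exact absurd (Finset.card_lt_card h3) (not_lt.mpr h1)
  have hn0' : n0 ∈ N' := ⟨hn0, by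
    rw [SetLike.mem_coe, Finsupp.mem_supported]⟩
  let ev : N' →ₗ[K] A := (Finsupp.lapply β).comp N'.subtype
  have hev : ∀ n : N', ev n = (n : ι →₀ A) β := fun n => rfl
  have hinj : Function.Injective ev := by
    rw [← LinearMap.ker_eq_bot, LinearMap.ker_eq_bot']
    intro n hn
    exact Subtype.ext (hinj0 n n.2 hn)
  have hsurj : LinearMap.range ev = ⊤ := by
    have hid : IsMulIdeal K (LinearMap.range ev) := by
      rintro a _ ⟨n, rfl⟩
      refine ⟨⟨⟨_, hN'map _ (hl a) n n.2⟩, ?_⟩, ⟨⟨_, hN'map _ (hr a) n n.2⟩, ?_⟩⟩ <;>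
      simp [hev]
    have hho : IsHomogSubmodule K 𝒜 (LinearMap.range ev) := by
      apply hp.homog
      rintro g _ ⟨n, rfl⟩
      refine ⟨⟨_, hN'map _ (hq g) n n.2⟩, ?_⟩
      simp [hev]
    rcases hs.2 (LinearMap.range ev) hid hho with h | h
    · exfalso
      have : ev ⟨n0, hn0'⟩ ∈ LinearMap.range ev := ⟨_, rfl⟩
      rw [h, Submodule.mem_bot] at this
      exact (Finsupp.mem_support_iff.mp hβ) this
    · exact h
  let e : N' ≃ₗ[K] A := LinearEquiv.ofBijective ev ⟨hinj, LinearMap.range_eq_top.mp hsurj⟩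
  have hes : ∀ v, ev (e.symm v) = v := fun v => e.apply_symm_apply v
  have hmap : ∀ (f : Module.End K A) (hf : ∀ n ∈ N, Finsupp.mapRange.linearMap f n ∈ N) (v : A),
      ((e.symm (f v) : N') : ι →₀ A) = Finsupp.mapRange.linearMap f (e.symm v : N') := by
    intro f hf v
    have : e.symm (f v) = ⟨_, hN'map f hf _ (e.symm v).2⟩ := by
      apply hinj
      rw [hes]
      have := hes v
      rw [hev] at this
      simp [hev, this]
    rw [this]
  refine ⟨fun i => (Finsupp.lapply i).comp (N'.subtype.comp (e.symm : A →ₗ[K] N')), ?_, ⟨β, ?_⟩, ?_⟩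
  · intro i
    refine ⟨?_, ?_⟩
    · intro a x
      have h1 := hmap _ (hl a) x
      have h2 := hmap _ (hr a) x
      simp only [LinearMap.mulLeft_apply, LinearMap.mulRight_apply] at h1 h2
      constructor
      · simp [h1]
      · simp [h2]
    · intro g x hx
      have h1 := hmap _ (hq g) x
      rw [hp.self g x hx] at h1
      simp only [LinearMap.comp_apply, LinearEquiv.coe_coe, Submodule.subtype_apply,
        Finsupp.lapply_apply, one_mul]
      rw [h1]
      simpa using hp.mem g _
  · ext v
    exact hes v
  · intro v
    exact ⟨_, (e.symm v).2.1, fun i => rfl⟩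

theorem exists_gradProj {K G M : Type*} [Field K] [CommGroup G] [DecidableEq G]
    [AddCommGroup M] [Module K M] [FiniteDimensional K M]
    (𝒜 : G → Submodule K M) (h : DirectSum.IsInternal 𝒜) :
    ∃ (p : G → Module.End K M) (S : Finset G), GradProj 𝒜 p S := by
  classical
  let _ := h.chooseDecomposition
  let p : G → Module.End K M := fun g =>
    (𝒜 g).subtype ∘ₗ (DirectSum.component K G (fun i => 𝒜 i) g) ∘ₗ
      (DirectSum.decomposeLinearEquiv 𝒜 : M →ₗ[K] _)
  have hpv : ∀ g x, p g x = (DirectSum.decompose 𝒜 x g : M) := fun g x => rfl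
  let b := Module.finBasis K M
  let S : Finset G := Finset.univ.biUnion fun i => (DirectSum.decompose 𝒜 (b i)).support
  refine ⟨p, S, ⟨?_, ?_, ?_, ?_⟩⟩
  · intro g x
    rw [hpv]; exact Subtype.coe_prop _
  · intro g x hx
    rw [hpv]; exact DirectSum.decompose_of_mem_same 𝒜 hx
  · intro g k x hx hne
    rw [hpv]; exact DirectSum.decompose_of_mem_ne 𝒜 hx hne.symm
  · intro x
    have : ∑ g ∈ S, p g = LinearMap.id := by
      apply b.ext
      intro i
      rw [LinearMap.sum_apply, LinearMap.id_apply]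
      simp only [hpv]
      conv_rhs => rw [← DirectSum.sum_support_decompose 𝒜 (b i)]
      symm
      apply Finset.sum_subset
      · intro g hg
        exact Finset.mem_biUnion.mpr ⟨i, Finset.mem_univ _, hg⟩
      · intro g _ hg
        rw [DFinsupp.notMem_support_iff] at hg
        rw [hg]; rfl
    have h2 := congrArg (fun f : Module.End K M => f x) this
    simpa [LinearMap.sum_apply] using h2

theorem GradProj.baseChange {F FF G A : Type*} [Field F] [Field FF] [Algebra F FF] [CommGroup G]
    [AddCommGroup A] [Module F A] {𝒜 : G → Submodule F A} {p : G → Module.End F A} {S : Finset G}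
    (hp : GradProj 𝒜 p S) :
    GradProj (fun g => (𝒜 g).baseChange FF) (fun g => (p g).baseChange FF) S := by
  refine ⟨?_, ?_, ?_, ?_⟩
  · intro g x
    induction x with
    | zero => simp
    | tmul a u =>
      rw [LinearMap.baseChange_tmul]
      exact Submodule.tmul_mem_baseChange_of_mem _ (hp.mem g u)
    | add x y hx hy => rw [map_add]; exact Submodule.add_mem _ hx hy
  · rintro g _ ⟨x, rfl⟩
    induction x with
    | zero => simp
    | tmul a u => simp [hp.self g u u.2]
    | add x y hx hy => rw [map_add, map_add, hx, hy]
  · rintro g k _ ⟨x, rfl⟩ hne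
    induction x with
    | zero => simp
    | tmul a u => simp [hp.other g k u u.2 hne]
    | add x y hx hy => rw [map_add, map_add, hx, hy, add_zero]
  · intro x
    induction x with
    | zero => simp
    | tmul a u => simp only [LinearMap.baseChange_tmul]; rw [← TensorProduct.tmul_sum, hp.sum]
    | add x y hx hy => simp only [map_add, Finset.sum_add_distrib, hx, hy]

theorem baseChange_mul_mem {F FF G A : Type*} [Field F] [Field FF] [Algebra F FF] [CommGroup G]
    [NonUnitalNonAssocRing A] [Module F A] [SMulCommClass F A A] [IsScalarTower F A A]
    {𝒜 : G → Submodule F A}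
    (hm : ∀ (g h : G), ∀ a ∈ 𝒜 g, ∀ b ∈ 𝒜 h, a * b ∈ 𝒜 (g * h))
    {g h : G} {x y : FF ⊗[F] A} (hx : x ∈ (𝒜 g).baseChange FF) (hy : y ∈ (𝒜 h).baseChange FF) :
    x * y ∈ (𝒜 (g * h)).baseChange FF := by
  obtain ⟨x, rfl⟩ := hx
  obtain ⟨y, rfl⟩ := hy
  induction x with
  | zero => simp
  | add x x' hx hx' => rw [map_add, add_mul]; exact Submodule.add_mem _ hx hx'
  | tmul a u =>
    induction y with
    | zero => simp
    | add x x' hx hx' => rw [map_add, mul_add]; exact Submodule.add_mem _ hx hx'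
    | tmul b v =>
      rw [LinearMap.baseChange_tmul, LinearMap.baseChange_tmul,
        Algebra.TensorProduct.tmul_mul_tmul]
      exact Submodule.tmul_mem_baseChange_of_mem _ (hm _ _ _ u.2 _ v.2)

/-- graded simplicity of `FF ⊗ A`. -/
theorem baseChange_simple {F FF G A : Type*} [Field F] [Field FF] [Algebra F FF] [CommGroup G]
    [DecidableEq G]
    [NonUnitalNonAssocRing A] [Module F A] [SMulCommClass F A A] [IsScalarTower F A A]
    {𝒜 : G → Submodule F A} {p : G → Module.End F A} {S : Finset G}
    (hp : GradProj 𝒜 p S) (hsimp : IsGradedSimple F 𝒜)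
    (hbase : ∀ φ : Module.End F A,
      φ ∈ centroid F (A := A) ⊓ endGrading F 𝒜 1 ↔ ∃ c : F, φ = c • (1 : Module.End F A))
    (J : Submodule FF (FF ⊗[F] A)) (hJ : ∃ x ∈ J, x ≠ 0)
    (hl : ∀ a : FF ⊗[F] A, ∀ x ∈ J, a * x ∈ J) (hr : ∀ a : FF ⊗[F] A, ∀ x ∈ J, x * a ∈ J)
    (hq : ∀ g, ∀ x ∈ J, (p g).baseChange FF x ∈ J) : J = ⊤ := by
  classical
  let e := Module.Basis.ofVectorSpace F FF
  let T : (_ →₀ A) →ₗ[F] FF ⊗[F] A := Finsupp.lsum F fun i => TensorProduct.mk F FF A (e i)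
  have hT : ∀ n, T n = n.sum fun i a => e i ⊗ₜ[F] a := fun n => rfl
  have hTmap : ∀ (f : Module.End F A) n,
      T (Finsupp.mapRange.linearMap f n) = f.baseChange FF (T n) := by
    intro f n
    induction n using Finsupp.induction_linear with
    | zero => simp
    | add x y hx hy => rw [map_add, map_add, hx, hy, map_add, map_add]
    | single i a => simp [hT]
  have hml : ∀ (a : A) x, (LinearMap.mulLeft F a).baseChange FF x = (1 ⊗ₜ[F] a) * x := by
    intro a x
    induction x with
    | zero => simp
    | add x y hx hy => rw [map_add, hx, hy, mul_add]
    | tmul b v => simp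
  have hmr : ∀ (a : A) x, (LinearMap.mulRight F a).baseChange FF x = x * (1 ⊗ₜ[F] a) := by
    intro a x
    induction x with
    | zero => simp
    | add x y hx hy => rw [map_add, hx, hy, add_mul]
    | tmul b v => simp
  obtain ⟨φ, hφ, ⟨β, hβ⟩, hn⟩ := key_family hp hsimp ((J.restrictScalars F).comap T) (by
      obtain ⟨x, hx, h0⟩ := hJ
      obtain ⟨n, hn⟩ := TensorProduct.eq_repr_basis_left e x
      refine ⟨n, ?_, ?_⟩
      · change T n ∈ J
        rw [hT, hn]; exact hx
      · rintro rfl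
        apply h0; rw [← hn]; simp)
    (fun a n hn => by
      change T _ ∈ J
      rw [hTmap, hml]; exact hl _ _ hn)
    (fun a n hn => by
      change T _ ∈ J
      rw [hTmap, hmr]; exact hr _ _ hn)
    (fun g n hn => by
      change T _ ∈ J
      rw [hTmap]; exact hq _ _ hn)
  choose c hc using fun i => (hbase (φ i)).mp (hφ i)
  rw [eq_top_iff]
  obtain ⟨a0, b0, hab⟩ := hsimp.1
  have hA : ∃ a : A, a ≠ 0 := ⟨a0, by rintro rfl; simp at hab⟩
  obtain ⟨a1, ha1⟩ := hA
  have hval : ∀ i (n : _ →₀ A) v, (∀ i, n i = φ i v) → n i = c i • v := by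
    intro i n v h
    rw [h, hc]; rfl
  -- the coefficients have finite support
  obtain ⟨n1, hn1, hn1v⟩ := hn a1
  let cf : _ →₀ F := Finsupp.onFinset n1.support c (by
    intro i hi
    rw [Finsupp.mem_support_iff, hval i n1 a1 hn1v]
    exact smul_ne_zero hi ha1)
  have hcf : ∀ i, cf i = c i := fun i => rfl
  let lam : FF := Finsupp.linearCombination F e cf
  have hlam : lam ≠ 0 := by
    intro h
    have h2 := (linearIndependent_iff.mp e.linearIndependent) cf h
    have h3 : c β = 0 := by rw [← hcf, h2]; rfl
    have h4 := hc β
    rw [hβ, h3, zero_smul] at h4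
    have h5 := congrArg (fun f : Module.End F A => f a1) h4
    exact ha1 h5
  have hmem : ∀ v : A, lam ⊗ₜ[F] v ∈ J := by
    intro v
    obtain ⟨n, hnJ, hnv⟩ := hn v
    have : n = cf.mapRange (fun r => r • v) (zero_smul _ _) := by
      ext i
      rw [hval i n v hnv, Finsupp.mapRange_apply, hcf]
    have h2 : T n = lam ⊗ₜ[F] v := by
      rw [hT, this, Finsupp.sum_mapRange_index (by simp)]
      change _ = (Finsupp.linearCombination F e cf) ⊗ₜ[F] v
      rw [Finsupp.linearCombination_apply, Finsupp.sum, Finsupp.sum, TensorProduct.sum_tmul]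
      refine Finset.sum_congr rfl fun i _ => ?_
      rw [TensorProduct.smul_tmul]
    rw [← h2]; exact hnJ
  intro x _
  induction x with
  | zero => exact J.zero_mem
  | add x y hx hy => exact J.add_mem (hx trivial) (hy trivial)
  | tmul b v =>
    have := J.smul_mem (b * lam⁻¹) (hmem v)
    rwa [TensorProduct.smul_tmul', smul_eq_mul, mul_assoc, inv_mul_cancel₀ hlam, mul_one] at this

theorem span_generic {F G FF A : Type*} [Field F] [CommGroup G] [DecidableEq G]
    [Field FF] [Algebra F FF] [Algebra (MvPolynomial (G × ℕ × ℕ) F) FF]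
    [IsScalarTower F (MvPolynomial (G × ℕ × ℕ) F) FF]
    (hinj : Function.Injective (algebraMap (MvPolynomial (G × ℕ × ℕ) F) FF))
    [NonUnitalNonAssocRing A] [Module F A] [SMulCommClass F A A]
    [IsScalarTower F A A]
    {𝒜 : G → Submodule F A} {p : G → Module.End F A} {S : Finset G} (hp : GradProj 𝒜 p S)
    (nU : G → ℕ) (bU : ∀ g : G, Module.Basis (Fin (nU g)) F (𝒜 g)) :
    Submodule.span FF (genericElems F FF 𝒜 nU bU) = ⊤ := by
  classical
  have key : ∀ g (k : Fin (nU g)), (1 : FF) ⊗ₜ[F] (bU g k : A) ∈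
      Submodule.span FF (genericElems F FF 𝒜 nU bU) := by
    intro g k
    let t := algebraMap (MvPolynomial (G × ℕ × ℕ) F) FF
    let r : MvPolynomial (Fin (nU g) × Fin (nU g)) F →ₐ[F] MvPolynomial (G × ℕ × ℕ) F :=
      MvPolynomial.rename (fun q => (g, (q.1 : ℕ), (q.2 : ℕ)))
    have hr : Function.Injective r := MvPolynomial.rename_injective _ (by
      rintro ⟨a, b⟩ ⟨c, d⟩ h
      simp only [Prod.mk.injEq, true_and] at h
      exact Prod.ext (Fin.ext h.1) (Fin.ext h.2))
    let M : Matrix (Fin (nU g)) (Fin (nU g)) FF :=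
      Matrix.of fun i j => t (MvPolynomial.X (g, (i : ℕ), (j : ℕ)))
    have hM : M = (t.comp (r : _ →+* _)).mapMatrix
        (Matrix.mvPolynomialX (Fin (nU g)) (Fin (nU g)) F) := by
      ext i j
      simp [M, r]
    have hdet : M.det ≠ 0 := by
      rw [hM, ← RingHom.map_det]
      intro h
      have h1 : Function.Injective (t.comp (r : _ →+* _)) := fun a b hab => hr (hinj hab)
      exact Matrix.det_mvPolynomialX_ne_zero (Fin (nU g)) F (h1 (by rw [h, map_zero]))
    have hu : IsUnit M.det := isUnit_iff_ne_zero.mpr hdet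
    have h1 : (1 : FF) ⊗ₜ[F] (bU g k : A) = ∑ i, M⁻¹ k i • ∑ j, M i j ⊗ₜ[F] (bU g j : A) := by
      simp only [Finset.smul_sum, TensorProduct.smul_tmul', smul_eq_mul]
      rw [Finset.sum_comm]
      simp only [← TensorProduct.sum_tmul]
      have h2 : ∀ j, ∑ i, M⁻¹ k i * M i j = (1 : Matrix _ _ FF) k j := by
        intro j
        rw [← Matrix.nonsing_inv_mul M hu, Matrix.mul_apply]
      simp only [h2, Matrix.one_apply]
      rw [Finset.sum_eq_single k]
      · simp
      · intro b _ hb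
        simp [hb.symm]
      · simp
    rw [h1]
    exact Submodule.sum_mem _ fun i _ => Submodule.smul_mem _ _
      (Submodule.subset_span ⟨g, i, rfl⟩)
  have key2 : ∀ u : A, (1 : FF) ⊗ₜ[F] u ∈ Submodule.span FF (genericElems F FF 𝒜 nU bU) := by
    intro u
    rw [← hp.sum u, TensorProduct.tmul_sum]
    refine Submodule.sum_mem _ fun g _ => ?_
    have h := (bU g).sum_repr ⟨p g u, hp.mem g u⟩
    have h' : p g u = ∑ i, (bU g).repr ⟨p g u, hp.mem g u⟩ i • (bU g i : A) := by
      have := congrArg (𝒜 g).subtype h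
      rw [map_sum] at this
      exact this.symm
    rw [h', TensorProduct.tmul_sum]
    refine Submodule.sum_mem _ fun i _ => ?_
    rw [TensorProduct.tmul_smul, ← algebraMap_smul FF]
    exact Submodule.smul_mem _ _ (key g i)
  rw [eq_top_iff]
  intro x _
  induction x with
  | zero => exact Submodule.zero_mem _
  | add x y hx hy => exact Submodule.add_mem _ (hx trivial) (hy trivial)
  | tmul b v =>
    have := Submodule.smul_mem _ b (key2 v)
    rwa [TensorProduct.smul_tmul', smul_eq_mul, mul_one] at this

/-! ### Coefficients and specializations -/

section Lifts

variable {F G FF A Λ : Type*} [Field F] [CommGroup G] [DecidableEq G]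
  [Field FF] [Algebra F FF] [Algebra (MvPolynomial (G × ℕ × ℕ) F) FF]
  [IsScalarTower F (MvPolynomial (G × ℕ × ℕ) F) FF]
  [NonUnitalNonAssocRing A] [Module F A] [SMulCommClass F A A] [IsScalarTower F A A]

/-- the coefficient map `FF[Λ] ⊗ X → FF ⊗ X`. -/
noncomputable def cfT (F FF Λ X : Type*) [Field F] [Field FF] [Algebra F FF] [AddCommGroup X]
    [Module F X] (μ : Λ →₀ ℕ) : MvPolynomial Λ FF ⊗[F] X →ₗ[F] FF ⊗[F] X :=
  ((MvPolynomial.lcoeff FF μ).restrictScalars F).rTensor X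

theorem cfT_tmul {X : Type*} [AddCommGroup X]
    [Module F X] (μ : Λ →₀ ℕ) (q : MvPolynomial Λ FF) (x : X) :
    cfT F FF Λ X μ (q ⊗ₜ x) = MvPolynomial.coeff μ q ⊗ₜ x := rfl

theorem cfT_mul [DecidableEq Λ] {X : Type*} [NonUnitalNonAssocRing X] [Module F X] [SMulCommClass F X X]
    [IsScalarTower F X X] (μ : Λ →₀ ℕ) (w w' : MvPolynomial Λ FF ⊗[F] X) :
    cfT F FF Λ X μ (w * w') = ∑ q ∈ Finset.HasAntidiagonal.antidiagonal μ,
      cfT F FF Λ X q.1 w * cfT F FF Λ X q.2 w' := by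
  induction w with
  | zero => simp
  | add x y hx hy => rw [add_mul, map_add, hx, hy, ← Finset.sum_add_distrib]; simp [add_mul]
  | tmul a u =>
    induction w' with
    | zero => simp
    | add x y hx hy => rw [mul_add, map_add, hx, hy, ← Finset.sum_add_distrib]; simp [mul_add]
    | tmul b v =>
      simp only [Algebra.TensorProduct.tmul_mul_tmul, cfT_tmul, MvPolynomial.coeff_mul,
        TensorProduct.sum_tmul]

theorem rTensor_algHom_mul {X C D : Type*} [CommRing C] [CommRing D] [Algebra F C] [Algebra F D]
    [NonUnitalNonAssocRing X] [Module F X] [SMulCommClass F X X]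
    [IsScalarTower F X X] (f : C →ₐ[F] D) (w w' : C ⊗[F] X) :
    f.toLinearMap.rTensor X (w * w') = f.toLinearMap.rTensor X w * f.toLinearMap.rTensor X w' := by
  induction w with
  | zero => simp
  | add x y hx hy => rw [add_mul, map_add, hx, hy, map_add, add_mul]
  | tmul a u =>
    induction w' with
    | zero => simp
    | add x y hx hy => rw [mul_add, map_add, hx, hy, map_add, mul_add]
    | tmul b v => simp

/-- `F[T] → FF` as an algebra map -/
noncomputable abbrev tMap (F G FF : Type*) [Field F]
    [Field FF] [Algebra F FF] [Algebra (MvPolynomial (G × ℕ × ℕ) F) FF]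
    [IsScalarTower F (MvPolynomial (G × ℕ × ℕ) F) FF] : MvPolynomial (G × ℕ × ℕ) F →ₐ[F] FF :=
  IsScalarTower.toAlgHom F (MvPolynomial (G × ℕ × ℕ) F) FF

theorem lift_elem
    (𝒜 : G → Submodule F A) (nU : G → ℕ) (bU : ∀ g : G, Module.Basis (Fin (nU g)) F (𝒜 g))
    (σ : MvPolynomial (G × ℕ × ℕ) F →ₐ[F] MvPolynomial Λ FF)
    (I : NonUnitalSubalgebra F (FF ⊗[F] A))
    (hσ : ∀ g (i : Fin (nU g)) μ, cfT F FF Λ A μ (σ.toLinearMap.rTensor A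
      (∑ j : Fin (nU g), (MvPolynomial.X (g, (i : ℕ), (j : ℕ))) ⊗ₜ[F] (bU g j : A))) ∈ I)
    (x : FF ⊗[F] A) (hx : x ∈ genericAlg F FF 𝒜 nU bU) :
    ∃ w : MvPolynomial (G × ℕ × ℕ) F ⊗[F] A, (tMap F G FF).toLinearMap.rTensor A w = x ∧
      ∀ μ, cfT F FF Λ A μ (σ.toLinearMap.rTensor A w) ∈ I := by
  classical
  induction hx using NonUnitalAlgebra.adjoin_induction with
  | mem x hx =>
    obtain ⟨g, i, rfl⟩ := hx
    exact ⟨_, by simp, hσ g i⟩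
  | add x y _ _ hx hy =>
    obtain ⟨w, hw, hw'⟩ := hx
    obtain ⟨v, hv, hv'⟩ := hy
    refine ⟨w + v, by rw [map_add, hw, hv], fun μ => ?_⟩
    rw [map_add, map_add]; exact I.add_mem (hw' μ) (hv' μ)
  | zero => exact ⟨0, by simp, fun μ => by rw [map_zero, map_zero]; exact I.zero_mem⟩
  | mul x y _ _ hx hy =>
    obtain ⟨w, hw, hw'⟩ := hx
    obtain ⟨v, hv, hv'⟩ := hy
    refine ⟨w * v, by rw [rTensor_algHom_mul, hw, hv], fun μ => ?_⟩
    rw [rTensor_algHom_mul, cfT_mul]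
    exact sum_mem fun q _ => I.mul_mem (hw' _) (hv' _)
  | smul r x _ hx =>
    obtain ⟨w, hw, hw'⟩ := hx
    refine ⟨r • w, by rw [map_smul, hw], fun μ => ?_⟩
    rw [map_smul, map_smul]; exact SMulMemClass.smul_mem r (hw' μ)

theorem act_tmul (a b : FF) (f : Module.End F A) (v : A) :
    LinearMap.tensorProductEnd F FF A (a ⊗ₜ[F] f) (b ⊗ₜ[F] v) = (a * b) ⊗ₜ[F] f v := by
  change (a • f.baseChange FF) (b ⊗ₜ[F] v) = _
  rw [LinearMap.smul_apply, LinearMap.baseChange_tmul, TensorProduct.smul_tmul', smul_eq_mul]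

theorem act_left (x v : FF ⊗[F] A) :
    LinearMap.tensorProductEnd F FF A ((LinearMap.mul F A).lTensor FF x) v = x * v := by
  induction x with
  | zero => simp
  | add x y hx hy => rw [map_add, map_add, LinearMap.add_apply, hx, hy, add_mul]
  | tmul a u =>
    induction v with
    | zero => simp
    | add x y hx hy => rw [map_add, hx, hy, mul_add]
    | tmul b v =>
      rw [LinearMap.lTensor_tmul, act_tmul, Algebra.TensorProduct.tmul_mul_tmul]; rfl

theorem act_right (x v : FF ⊗[F] A) :
    LinearMap.tensorProductEnd F FF A ((LinearMap.mul F A).flip.lTensor FF x) v = v * x := by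
  induction x with
  | zero => simp
  | add x y hx hy => rw [map_add, map_add, LinearMap.add_apply, hx, hy, mul_add]
  | tmul a u =>
    induction v with
    | zero => simp
    | add x y hx hy => rw [map_add, hx, hy, add_mul]
    | tmul b v =>
      rw [LinearMap.lTensor_tmul, act_tmul, Algebra.TensorProduct.tmul_mul_tmul, mul_comm]; rfl

theorem act_injective (w : FF ⊗[F] Module.End F A)
    (h : LinearMap.tensorProductEnd F FF A w = 0) : w = 0 := by
  classical
  let e := Module.Basis.ofVectorSpace F FF
  obtain ⟨n, rfl⟩ := TensorProduct.eq_repr_basis_left e w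
  have h1 : ∀ u : A, ∀ i, n i u = 0 := by
    intro u i
    have h2 := congrArg (fun f : Module.End FF (FF ⊗[F] A) => f (1 ⊗ₜ u)) h
    simp only [Finsupp.sum, map_sum, LinearMap.sum_apply, LinearMap.zero_apply] at h2
    have h3 := TensorProduct.sum_tmul_basis_left_eq_zero e
      (n.mapRange (fun f : Module.End F A => f u) rfl) (by
        rw [Finsupp.sum_mapRange_index (by simp), Finsupp.sum, ← h2]
        refine Finset.sum_congr rfl fun i _ => ?_
        rw [act_tmul, mul_one])
    have h4 := DFunLike.congr_fun h3 i
    simpa using h4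
  have : n = 0 := by
    ext i u
    exact h1 u i
  rw [this]; simp

theorem cfT_lTensor {X Y C : Type*} [AddCommGroup X] [Module F X] [AddCommGroup Y] [Module F Y]
    [CommRing C] [Algebra F C]
    (f : X →ₗ[F] Y) (σ : C →ₐ[F] MvPolynomial Λ FF) (μ : Λ →₀ ℕ) (w : C ⊗[F] X) :
    cfT F FF Λ Y μ (σ.toLinearMap.rTensor Y (f.lTensor C w)) =
      f.lTensor FF (cfT F FF Λ X μ (σ.toLinearMap.rTensor X w)) := by
  induction w with
  | zero => simp
  | add x y hx hy => simp only [map_add, hx, hy]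
  | tmul a u => simp [cfT_tmul]

theorem rT_lTensor {X Y C D : Type*} [AddCommGroup X] [Module F X] [AddCommGroup Y] [Module F Y]
    [CommRing C] [Algebra F C] [CommRing D] [Algebra F D]
    (f : X →ₗ[F] Y) (σ : C →ₐ[F] D) (w : C ⊗[F] X) :
    σ.toLinearMap.rTensor Y (f.lTensor C w) =
      f.lTensor D (σ.toLinearMap.rTensor X w) := by
  induction w with
  | zero => simp
  | add x y hx hy => simp only [map_add, hx, hy]
  | tmul a u => simp

theorem lift_op
    (𝒜 : G → Submodule F A) (nU : G → ℕ) (bU : ∀ g : G, Module.Basis (Fin (nU g)) F (𝒜 g))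
    (σ : MvPolynomial (G × ℕ × ℕ) F →ₐ[F] MvPolynomial Λ FF)
    (I : NonUnitalSubalgebra F (FF ⊗[F] A))
    (hσ : ∀ g (i : Fin (nU g)) μ, cfT F FF Λ A μ (σ.toLinearMap.rTensor A
      (∑ j : Fin (nU g), (MvPolynomial.X (g, (i : ℕ), (j : ℕ))) ⊗ₜ[F] (bU g j : A))) ∈ I)
    (B : NonUnitalSubalgebra F (Module.End FF (FF ⊗[F] A)))
    (hBl : ∀ x ∈ I, LinearMap.mulLeft FF x ∈ B) (hBr : ∀ x ∈ I, LinearMap.mulRight FF x ∈ B)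
    (s : Module.End F (genericAlg F FF 𝒜 nU bU))
    (hs : s ∈ MultAlg F (A := genericAlg F FF 𝒜 nU bU)) :
    ∃ w : MvPolynomial (G × ℕ × ℕ) F ⊗[F] Module.End F A,
      (∀ x : genericAlg F FF 𝒜 nU bU, LinearMap.tensorProductEnd F FF A
        ((tMap F G FF).toLinearMap.rTensor _ w) (x : FF ⊗[F] A) = (s x : FF ⊗[F] A)) ∧
      ∀ μ, LinearMap.tensorProductEnd F FF A
        (cfT F FF Λ _ μ (σ.toLinearMap.rTensor _ w)) ∈ B := by
  classical
  unfold MultAlg at hs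
  induction hs using NonUnitalAlgebra.adjoin_induction with
  | mem s hs =>
    rcases hs with ⟨a, rfl⟩ | ⟨a, rfl⟩
    · obtain ⟨w, hw, hw'⟩ := lift_elem 𝒜 nU bU σ I hσ a a.2
      refine ⟨(LinearMap.mul F A).lTensor _ w, ?_, ?_⟩
      · intro x
        rw [rT_lTensor, act_left, hw]
        rfl
      · intro μ
        rw [cfT_lTensor]
        convert hBl _ (hw' μ) using 1
        refine LinearMap.ext fun v => ?_
        exact act_left _ _
    · obtain ⟨w, hw, hw'⟩ := lift_elem 𝒜 nU bU σ I hσ a a.2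
      refine ⟨(LinearMap.mul F A).flip.lTensor _ w, ?_, ?_⟩
      · intro x
        rw [rT_lTensor, act_right, hw]
        rfl
      · intro μ
        rw [cfT_lTensor]
        convert hBr _ (hw' μ) using 1
        refine LinearMap.ext fun v => ?_
        exact act_right _ _
  | add x y _ _ hx hy =>
    obtain ⟨w, hw, hw'⟩ := hx
    obtain ⟨v, hv, hv'⟩ := hy
    refine ⟨w + v, fun z => ?_, fun μ => ?_⟩
    · rw [map_add, map_add, LinearMap.add_apply, hw, hv]; rfl
    · rw [map_add, map_add, map_add]; exact B.add_mem (hw' μ) (hv' μ)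
  | zero =>
    refine ⟨0, fun z => by simp, fun μ => ?_⟩
    rw [map_zero, map_zero, map_zero]; exact B.zero_mem
  | mul x y _ _ hx hy =>
    obtain ⟨w, hw, hw'⟩ := hx
    obtain ⟨v, hv, hv'⟩ := hy
    refine ⟨w * v, fun z => ?_, fun μ => ?_⟩
    · rw [rTensor_algHom_mul, map_mul, Module.End.mul_apply, hv, hw]; rfl
    · rw [rTensor_algHom_mul, cfT_mul, map_sum]
      refine sum_mem fun q _ => ?_
      rw [map_mul]
      exact B.mul_mem (hw' _) (hv' _)
  | smul r x _ hx =>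
    obtain ⟨w, hw, hw'⟩ := hx
    have hsm : ∀ y : FF ⊗[F] Module.End F A, LinearMap.tensorProductEnd F FF A (r • y) =
        r • LinearMap.tensorProductEnd F FF A y := by
      intro y
      rw [← algebraMap_smul FF, map_smul, algebraMap_smul]
    refine ⟨r • w, fun z => ?_, fun μ => ?_⟩
    · rw [map_smul, hsm, LinearMap.smul_apply, hw]; rfl
    · rw [map_smul, map_smul, hsm]; exact SMulMemClass.smul_mem r (hw' μ)

theorem lift_op'
    (U : NonUnitalSubalgebra F (FF ⊗[F] A))
    (B : NonUnitalSubalgebra F (Module.End FF (FF ⊗[F] A)))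
    (hBl : ∀ x ∈ U, LinearMap.mulLeft FF x ∈ B) (hBr : ∀ x ∈ U, LinearMap.mulRight FF x ∈ B)
    (s : Module.End F U) (hs : s ∈ MultAlg F (A := U)) :
    ∃ m ∈ B, ∀ x : U, m (x : FF ⊗[F] A) = (s x : FF ⊗[F] A) := by
  unfold MultAlg at hs
  induction hs using NonUnitalAlgebra.adjoin_induction with
  | mem s hs =>
    rcases hs with ⟨a, rfl⟩ | ⟨a, rfl⟩
    · exact ⟨_, hBl a a.2, fun x => rfl⟩
    · exact ⟨_, hBr a a.2, fun x => rfl⟩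
  | add x y _ _ hx hy =>
    obtain ⟨w, hw, hw'⟩ := hx
    obtain ⟨v, hv, hv'⟩ := hy
    exact ⟨w + v, B.add_mem hw hv, fun z => by rw [LinearMap.add_apply, hw', hv']; rfl⟩
  | zero => exact ⟨0, B.zero_mem, fun z => by simp⟩
  | mul x y _ _ hx hy =>
    obtain ⟨w, hw, hw'⟩ := hx
    obtain ⟨v, hv, hv'⟩ := hy
    exact ⟨w * v, B.mul_mem hw hv, fun z => by rw [Module.End.mul_apply, hv', hw']; rfl⟩
  | smul r x _ hx =>
    obtain ⟨w, hw, hw'⟩ := hx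
    exact ⟨r • w, SMulMemClass.smul_mem r hw, fun z => by rw [LinearMap.smul_apply, hw']; rfl⟩

theorem central_scalar
    (hinj : Function.Injective (algebraMap (MvPolynomial (G × ℕ × ℕ) F) FF))
    (hA : ∃ a : A, a ≠ 0)
    (𝒜 : G → Submodule F A) (nU : G → ℕ) (bU : ∀ g : G, Module.Basis (Fin (nU g)) F (𝒜 g))
    (hspan : Submodule.span FF (genericAlg F FF 𝒜 nU bU : Set (FF ⊗[F] A)) = ⊤)
    (σ : MvPolynomial (G × ℕ × ℕ) F →ₐ[F] MvPolynomial Λ FF)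
    (I : NonUnitalSubalgebra F (FF ⊗[F] A))
    (hσ : ∀ g (i : Fin (nU g)) μ, cfT F FF Λ A μ (σ.toLinearMap.rTensor A
      (∑ j : Fin (nU g), (MvPolynomial.X (g, (i : ℕ), (j : ℕ))) ⊗ₜ[F] (bU g j : A))) ∈ I)
    (B : NonUnitalSubalgebra F (Module.End FF (FF ⊗[F] A)))
    (hBl : ∀ x ∈ I, LinearMap.mulLeft FF x ∈ B) (hBr : ∀ x ∈ I, LinearMap.mulRight FF x ∈ B)
    (s : Module.End F (genericAlg F FF 𝒜 nU bU))
    (hs : s ∈ MultAlg F (A := genericAlg F FF 𝒜 nU bU)) (z : FF)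
    (hz : ∀ x : genericAlg F FF 𝒜 nU bU, (s x : FF ⊗[F] A) = z • (x : FF ⊗[F] A)) :
    ∃ c : MvPolynomial (G × ℕ × ℕ) F, algebraMap _ FF c = z ∧
      ∀ μ, MvPolynomial.coeff μ (σ c) • (1 : Module.End FF (FF ⊗[F] A)) ∈ B := by
  obtain ⟨w, hw, hwB⟩ := lift_op 𝒜 nU bU σ I hσ B hBl hBr s hs
  have h1 : LinearMap.tensorProductEnd F FF A ((tMap F G FF).toLinearMap.rTensor _ w) =
      z • (1 : Module.End FF (FF ⊗[F] A)) := by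
    apply LinearMap.ext_on hspan
    intro x hx
    rw [hw ⟨x, hx⟩, hz ⟨x, hx⟩]; rfl
  have h2 : (tMap F G FF).toLinearMap.rTensor _ w = z ⊗ₜ[F] (1 : Module.End F A) := by
    rw [← sub_eq_zero]
    apply act_injective
    rw [map_sub, h1, sub_eq_zero]
    have : z ⊗ₜ[F] (1 : Module.End F A) = z • (1 : FF ⊗[F] Module.End F A) := by
      rw [Algebra.TensorProduct.one_def, TensorProduct.smul_tmul', smul_eq_mul, mul_one]
    rw [this, map_smul, map_one]
  have hone : (1 : Module.End F A) ≠ 0 := by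
    obtain ⟨a, ha⟩ := hA
    intro h
    exact ha (congrArg (fun f : Module.End F A => f a) h)
  obtain ⟨ε, hε⟩ : ∃ ε : Module.Dual F (Module.End F A), ε 1 = 1 := by
    obtain ⟨ε, hε⟩ := Module.Projective.exists_dual_ne_zero F hone
    exact ⟨(ε 1)⁻¹ • ε, by simp [hε]⟩
  let c : MvPolynomial (G × ℕ × ℕ) F := TensorProduct.rid F _ (ε.lTensor _ w)
  have hc : algebraMap _ FF c = z := by
    have h3 : ∀ w : MvPolynomial (G × ℕ × ℕ) F ⊗[F] Module.End F A,
        algebraMap _ FF (TensorProduct.rid F _ (ε.lTensor _ w)) =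
        TensorProduct.rid F _ (ε.lTensor _ ((tMap F G FF).toLinearMap.rTensor _ w)) := by
      intro w
      induction w with
      | zero => simp
      | add x y hx hy => simp only [map_add, hx, hy]
      | tmul a u =>
        simp only [LinearMap.lTensor_tmul, LinearMap.rTensor_tmul, TensorProduct.rid_tmul]
        exact map_smul (tMap F G FF) (ε u) a
    rw [h3, h2]
    simp [hε]
  refine ⟨c, hc, fun μ => ?_⟩
  have h4 : w = c ⊗ₜ[F] (1 : Module.End F A) := by
    have hi : Function.Injective ((tMap F G FF).toLinearMap.rTensor (Module.End F A)) :=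
      Module.Flat.rTensor_preserves_injective_linearMap _ hinj
    apply hi
    rw [h2, LinearMap.rTensor_tmul]
    exact congrArg (fun t => t ⊗ₜ[F] (1 : Module.End F A)) hc.symm
  have h5 := hwB μ
  rw [h4, LinearMap.rTensor_tmul, cfT_tmul] at h5
  have : ∀ z : FF, z ⊗ₜ[F] (1 : Module.End F A) = z • (1 : FF ⊗[F] Module.End F A) := by
    intro z
    rw [Algebra.TensorProduct.one_def, TensorProduct.smul_tmul', smul_eq_mul, mul_one]
  rw [this, map_smul, map_one] at h5
  exact h5

end Lifts

section Local

variable {F G FF A : Type*} [Field F] [CommGroup G] [DecidableEq G]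
  [Field FF] [Algebra F FF] [Algebra (MvPolynomial (G × ℕ × ℕ) F) FF]
  [IsScalarTower F (MvPolynomial (G × ℕ × ℕ) F) FF]
  [NonUnitalNonAssocRing A] [Module F A] [SMulCommClass F A A] [IsScalarTower F A A]

theorem generic_proj {𝒜 : G → Submodule F A} {p : G → Module.End F A} {S : Finset G}
    (hp : GradProj 𝒜 p S)
    (hm : ∀ (g h : G), ∀ a ∈ 𝒜 g, ∀ b ∈ 𝒜 h, a * b ∈ 𝒜 (g * h))
    (nU : G → ℕ) (bU : ∀ g : G, Module.Basis (Fin (nU g)) F (𝒜 g))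
    (x : FF ⊗[F] A) (hx : x ∈ genericAlg F FF 𝒜 nU bU) :
    ∀ g, (p g).baseChange FF x ∈ genericAlg F FF 𝒜 nU bU := by
  have hP := hp.baseChange (FF := FF)
  unfold genericAlg at *
  induction hx using NonUnitalAlgebra.adjoin_induction with
  | mem x hx =>
    obtain ⟨k, i, rfl⟩ := id hx
    intro g
    by_cases hgk : g = k
    · subst hgk
      rw [hP.self g _ (Submodule.sum_mem _ fun j _ =>
        Submodule.tmul_mem_baseChange_of_mem _ (bU g j).2)]
      exact NonUnitalAlgebra.subset_adjoin F hx
    · rw [hP.other k g _ (Submodule.sum_mem _ fun j _ =>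
        Submodule.tmul_mem_baseChange_of_mem _ (bU k j).2) hgk]
      exact zero_mem _
  | add x y _ _ hx hy => intro g; rw [map_add]; exact add_mem (hx g) (hy g)
  | zero => intro g; rw [map_zero]; exact zero_mem _
  | smul r x _ hx =>
    intro g
    rw [← algebraMap_smul FF, map_smul, algebraMap_smul]
    exact SMulMemClass.smul_mem r (hx g)
  | mul x y _ _ hx hy =>
    intro g
    rw [← hP.sum x, ← hP.sum y, Finset.sum_mul_sum, map_sum]
    refine sum_mem fun a _ => ?_
    rw [map_sum]
    refine sum_mem fun b _ => ?_
    have hab := baseChange_mul_mem (FF := FF) hm (hP.mem a x) (hP.mem b y)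
    by_cases hg : g = a * b
    · subst hg
      rw [hP.self _ _ hab]
      exact mul_mem (hx a) (hy b)
    · rw [hP.other _ _ _ hab hg]
      exact zero_mem _

/-- coordinates in the components. -/
theorem exists_coord {𝒜 : G → Submodule F A} {p : G → Module.End F A} {S : Finset G}
    (hp : GradProj 𝒜 p S)
    (nU : G → ℕ) (bU : ∀ g : G, Module.Basis (Fin (nU g)) F (𝒜 g)) (g : G) :
    ∃ κ : Fin (nU g) → (FF ⊗[F] A →ₗ[FF] FF),
      (∀ v ∈ (𝒜 g).baseChange FF, ∑ j, κ j v ⊗ₜ[F] (bU g j : A) = v) ∧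
      (∀ (r : Fin (nU g) → FF) (j), κ j (∑ k, r k ⊗ₜ[F] (bU g k : A)) = r j) := by
  let pr : A →ₗ[F] 𝒜 g := (p g).codRestrict (𝒜 g) (hp.mem g)
  have hpr : ∀ u : 𝒜 g, pr u = u := fun u => Subtype.ext (hp.self g u u.2)
  let κ : Fin (nU g) → (FF ⊗[F] A →ₗ[FF] FF) := fun j =>
    LinearMap.liftBaseChange FF ((Algebra.linearMap F FF) ∘ₗ ((bU g).coord j) ∘ₗ pr)
  have hκ : ∀ j (r : FF) (u : 𝒜 g), κ j (r ⊗ₜ[F] (u : A)) = r * algebraMap F FF ((bU g).repr u j) := by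
    intro j r u
    simp [κ, hpr]
  refine ⟨κ, ?_, ?_⟩
  · rintro _ ⟨v, rfl⟩
    induction v with
    | zero => simp
    | add x y hx hy =>
      simp only [map_add, TensorProduct.add_tmul, Finset.sum_add_distrib]
      rw [hx, hy]
    | tmul r u =>
      rw [LinearMap.baseChange_tmul, Submodule.subtype_apply]
      simp only [hκ]
      have h := congrArg (𝒜 g).subtype ((bU g).sum_repr u)
      rw [map_sum] at h
      simp only [Submodule.subtype_apply, Submodule.coe_smul] at h
      conv_rhs => rw [← h, TensorProduct.tmul_sum]
      refine Finset.sum_congr rfl fun j _ => ?_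
      rw [← TensorProduct.smul_tmul, Algebra.smul_def, mul_comm]
  · intro r j
    rw [map_sum]
    simp only [hκ, Module.Basis.repr_self]
    rw [Finset.sum_eq_single j]
    · simp
    · intro b _ hb
      simp [Finsupp.single_apply, hb]
    · simp

/-- the main point: the central localization is graded simple. -/
theorem local_simple
    (hinj : Function.Injective (algebraMap (MvPolynomial (G × ℕ × ℕ) F) FF))
    {𝒜 : G → Submodule F A} {p : G → Module.End F A} {S : Finset G}
    (hp : GradProj 𝒜 p S)
    (hm : ∀ (g h : G), ∀ a ∈ 𝒜 g, ∀ b ∈ 𝒜 h, a * b ∈ 𝒜 (g * h))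
    (hsimp : IsGradedSimple F 𝒜)
    (hbase : ∀ φ : Module.End F A,
      φ ∈ centroid F (A := A) ⊓ endGrading F 𝒜 1 ↔ ∃ c : F, φ = c • (1 : Module.End F A))
    (nU : G → ℕ) (bU : ∀ g : G, Module.Basis (Fin (nU g)) F (𝒜 g))
    (hspan : Submodule.span FF (genericAlg F FF 𝒜 nU bU : Set (FF ⊗[F] A)) = ⊤)
    (θ : Module.End F ↥(genericAlg F FF 𝒜 nU bU) → FF)
    (hθ : ∀ s ∈ centerMultE F FF 𝒜 (genericAlg F FF 𝒜 nU bU),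
      ∀ x : ↥(genericAlg F FF 𝒜 nU bU), ((s x : ↥(genericAlg F FF 𝒜 nU bU)) : FF ⊗[F] A) =
        θ s • (x : FF ⊗[F] A))
    (hθ0 : ∀ s ∈ centerMultE F FF 𝒜 (genericAlg F FF 𝒜 nU bU), s ≠ 0 → θ s ≠ 0)
    (L : NonUnitalSubalgebra F (FF ⊗[F] A))
    (hUL : ∀ x ∈ genericAlg F FF 𝒜 nU bU, x ∈ L)
    (hL : (L : Set (FF ⊗[F] A)) =
      {y | ∃ s ∈ centerMultE F FF 𝒜 (genericAlg F FF 𝒜 nU bU), s ≠ 0 ∧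
        ∃ x ∈ genericAlg F FF 𝒜 nU bU, y = (θ s)⁻¹ • x})
    (I : Submodule F (FF ⊗[F] A)) (hIL : ∀ x ∈ I, x ∈ L)
    (hl : ∀ a ∈ L, ∀ x ∈ I, a * x ∈ I) (hr : ∀ a ∈ L, ∀ x ∈ I, x * a ∈ I)
    (hq : ∀ g, ∀ x ∈ I, (p g).baseChange FF x ∈ I) (hI0 : ∃ x ∈ I, x ≠ 0) :
    ∀ v ∈ L, v ∈ I := by
  classical
  have hP := hp.baseChange (FF := FF)
  have hLm : ∀ y, y ∈ L ↔ ∃ s ∈ centerMultE F FF 𝒜 (genericAlg F FF 𝒜 nU bU), s ≠ 0 ∧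
        ∃ x ∈ genericAlg F FF 𝒜 nU bU, y = (θ s)⁻¹ • x := by
    intro y
    rw [← SetLike.mem_coe, hL]; rfl
  have hA : ∃ a : A, a ≠ 0 := by
    obtain ⟨a0, b0, hab⟩ := hsimp.1
    exact ⟨a0, by rintro rfl; simp at hab⟩
  -- the operators preserving `I`
  let B1 : NonUnitalSubalgebra F (Module.End FF (FF ⊗[F] A)) :=
    { carrier := {m | ∀ v ∈ I, m v ∈ I}
      add_mem' := fun h h' v hv => I.add_mem (h v hv) (h' v hv)
      zero_mem' := fun v _ => I.zero_mem
      mul_mem' := fun h h' v hv => h _ (h' v hv)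
      smul_mem' := fun c m h v hv => I.smul_mem c (h v hv) }
  -- the intersection of `I` with the generic algebra
  let I0 : NonUnitalSubalgebra F (FF ⊗[F] A) :=
    { carrier := {v | v ∈ I ∧ v ∈ genericAlg F FF 𝒜 nU bU}
      add_mem' := fun h h' => ⟨I.add_mem h.1 h'.1, add_mem h.2 h'.2⟩
      zero_mem' := ⟨I.zero_mem, zero_mem _⟩
      mul_mem' := fun h h' => ⟨hl _ (hIL _ h.1) _ h'.1, mul_mem h.2 h'.2⟩
      smul_mem' := fun c x h => ⟨I.smul_mem c h.1, SMulMemClass.smul_mem c h.2⟩ }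
  have hI0m : ∀ v, v ∈ I0 ↔ v ∈ I ∧ v ∈ genericAlg F FF 𝒜 nU bU := fun v => Iff.rfl
  obtain ⟨v0, hv0, hv00⟩ := hI0
  obtain ⟨s, hs, hs0, x0, hx0, hvx⟩ := (hLm v0).mp (hIL v0 hv0)
  have hzs := hθ0 s hs hs0
  have hx0I : x0 ∈ I := by
    obtain ⟨m, hmB, hms⟩ := lift_op' (genericAlg F FF 𝒜 nU bU) B1
      (fun x hx v hv => hl x (hUL x hx) v hv) (fun x hx v hv => hr x (hUL x hx) v hv) s hs.1
    have h1 : m = θ s • (1 : Module.End FF (FF ⊗[F] A)) := by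
      apply LinearMap.ext_on hspan
      intro x hx
      rw [hms ⟨x, hx⟩, hθ s hs ⟨x, hx⟩]; rfl
    have h2 := hmB v0 hv0
    rw [h1, hvx] at h2
    have h3 : (θ s • (1 : Module.End FF (FF ⊗[F] A))) ((θ s)⁻¹ • x0) = x0 := by
      rw [LinearMap.smul_apply, Module.End.one_apply, smul_smul, mul_inv_cancel₀ hzs, one_smul]
    rwa [h3] at h2
  have hx00 : x0 ≠ 0 := by
    rintro rfl
    exact hv00 (by rw [hvx, smul_zero])
  -- the `FF`-span of `I0` is everything
  have hJ : Submodule.span FF (I0 : Set (FF ⊗[F] A)) = ⊤ := by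
    apply baseChange_simple hp hsimp hbase
    · exact ⟨x0, Submodule.subset_span ⟨hx0I, hx0⟩, hx00⟩
    · intro a x hx
      have ha : a ∈ Submodule.span FF (genericAlg F FF 𝒜 nU bU : Set (FF ⊗[F] A)) := by
        rw [hspan]; trivial
      induction hx using Submodule.span_induction with
      | zero => rw [mul_zero]; exact Submodule.zero_mem _
      | add x y _ _ hx hy => rw [mul_add]; exact Submodule.add_mem _ hx hy
      | smul c x _ hx => rw [mul_smul_comm]; exact Submodule.smul_mem _ _ hx
      | mem x hx =>
        induction ha using Submodule.span_induction with
        | zero => rw [zero_mul]; exact Submodule.zero_mem _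
        | add x y _ _ hx hy => rw [add_mul]; exact Submodule.add_mem _ hx hy
        | smul c x _ hx => rw [smul_mul_assoc]; exact Submodule.smul_mem _ _ hx
        | mem a ha =>
          exact Submodule.subset_span ⟨hl a (hUL a ha) x hx.1, mul_mem ha hx.2⟩
    · intro a x hx
      have ha : a ∈ Submodule.span FF (genericAlg F FF 𝒜 nU bU : Set (FF ⊗[F] A)) := by
        rw [hspan]; trivial
      induction hx using Submodule.span_induction with
      | zero => rw [zero_mul]; exact Submodule.zero_mem _
      | add x y _ _ hx hy => rw [add_mul]; exact Submodule.add_mem _ hx hy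
      | smul c x _ hx => rw [smul_mul_assoc]; exact Submodule.smul_mem _ _ hx
      | mem x hx =>
        induction ha using Submodule.span_induction with
        | zero => rw [mul_zero]; exact Submodule.zero_mem _
        | add x y _ _ hx hy => rw [mul_add]; exact Submodule.add_mem _ hx hy
        | smul c x _ hx => rw [mul_smul_comm]; exact Submodule.smul_mem _ _ hx
        | mem a ha =>
          exact Submodule.subset_span ⟨hr a (hUL a ha) x hx.1, mul_mem hx.2 ha⟩
    · intro g x hx
      induction hx using Submodule.span_induction with
      | zero => rw [map_zero]; exact Submodule.zero_mem _
      | add x y _ _ hx hy => rw [map_add]; exact Submodule.add_mem _ hx hy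
      | smul c x _ hx => rw [map_smul]; exact Submodule.smul_mem _ _ hx
      | mem x hx =>
        exact Submodule.subset_span ⟨hq g x hx.1, generic_proj hp hm nU bU x hx.2 g⟩
  have hJg : ∀ g, ∀ v ∈ (𝒜 g).baseChange FF, v ∈ Submodule.span FF
      {w | w ∈ I0 ∧ w ∈ (𝒜 g).baseChange FF} := by
    intro g v hv
    have h1 : v ∈ Submodule.span FF (I0 : Set (FF ⊗[F] A)) := by rw [hJ]; trivial
    rw [← hP.self g v hv]
    clear hv
    induction h1 using Submodule.span_induction with
    | zero => rw [map_zero]; exact Submodule.zero_mem _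
    | add x y _ _ hx hy => rw [map_add]; exact Submodule.add_mem _ hx hy
    | smul c x _ hx => rw [map_smul]; exact Submodule.smul_mem _ _ hx
    | mem x hx =>
      exact Submodule.subset_span ⟨⟨hq g x hx.1, generic_proj hp hm nU bU x hx.2 g⟩, hP.mem g x⟩
  -- the specialization
  choose κ hκ1 hκ2 using fun g => exists_coord (FF := FF) hp nU bU g
  have hy : ∀ g (i : Fin (nU g)), ∃ l : FF ⊗[F] A →₀ FF,
      (l.support : Set (FF ⊗[F] A)) ⊆ {w | w ∈ I0 ∧ w ∈ (𝒜 g).baseChange FF} ∧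
      (l.sum fun w r => r • w) = ∑ j : Fin (nU g),
        (algebraMap (MvPolynomial (G × ℕ × ℕ) F) FF
          (MvPolynomial.X (g, (i : ℕ), (j : ℕ)))) ⊗ₜ[F] ((bU g j : A)) := by
    intro g i
    apply Submodule.mem_span_set.mp
    exact hJg g _ (Submodule.sum_mem _ fun j _ =>
        Submodule.tmul_mem_baseChange_of_mem _ (bU g j).2)
  choose l hl1 hl2 using hy
  let Λ := G × ℕ × (FF ⊗[F] A)
  let f : G × ℕ × ℕ → MvPolynomial Λ FF := fun q =>
    if h : q.2.1 < nU q.1 ∧ q.2.2 < nU q.1 then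
      ∑ a ∈ (l q.1 ⟨q.2.1, h.1⟩).support,
        MvPolynomial.monomial (Finsupp.single (q.1, q.2.1, a) 1) (κ q.1 ⟨q.2.2, h.2⟩ a)
    else MvPolynomial.C (algebraMap _ FF (MvPolynomial.X q : MvPolynomial (G × ℕ × ℕ) F))
  have hf : ∀ g (i j : Fin (nU g)), f (g, (i : ℕ), (j : ℕ)) = ∑ a ∈ (l g i).support,
      MvPolynomial.monomial (Finsupp.single (g, (i : ℕ), a) 1) (κ g j a) := by
    intro g i j
    have h : (i : ℕ) < nU g ∧ (j : ℕ) < nU g := ⟨i.2, j.2⟩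
    simp only [f, dif_pos h]
  let σ : MvPolynomial (G × ℕ × ℕ) F →ₐ[F] MvPolynomial Λ FF := MvPolynomial.aeval f
  let evv : Λ → FF := fun q => if h : q.2.1 < nU q.1 then l q.1 ⟨q.2.1, h⟩ q.2.2 else 0
  have hevv : ∀ g (i : Fin (nU g)) a, evv (g, (i : ℕ), a) = l g i a := by
    intro g i a
    simp only [evv, dif_pos i.2]
  have hevσ : ∀ c, MvPolynomial.eval evv (σ c) = algebraMap _ FF c := by
    intro c
    let ev' : MvPolynomial Λ FF →ₐ[F] FF := (MvPolynomial.aeval (R := FF) evv).restrictScalars F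
    have h1 : ev'.comp σ = tMap F G FF := by
      apply MvPolynomial.algHom_ext
      rintro ⟨g, i, j⟩
      have h0 : (ev'.comp σ) (MvPolynomial.X (g, i, j)) = MvPolynomial.eval evv (f (g, i, j)) := by
        simp [ev', σ, MvPolynomial.aeval_eq_eval]
      rw [h0]
      by_cases h : i < nU g ∧ j < nU g
      · have h2 := hf g ⟨i, h.1⟩ ⟨j, h.2⟩
        simp only at h2
        rw [h2, map_sum]
        have h3 := congrArg (κ g ⟨j, h.2⟩) (hl2 g ⟨i, h.1⟩)
        rw [hκ2, Finsupp.sum, map_sum] at h3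
        refine Eq.trans ?_ h3
        refine Finset.sum_congr rfl fun a _ => ?_
        have h4 := hevv g ⟨i, h.1⟩ a
        simp only at h4
        rw [MvPolynomial.eval_monomial, map_smul, smul_eq_mul]
        simp [h4, mul_comm]
      · simp only [f, dif_neg h, MvPolynomial.eval_C]
        rfl
    exact DFunLike.congr_fun h1 c
  have hσ : ∀ g (i : Fin (nU g)) μ, cfT F FF Λ A μ (σ.toLinearMap.rTensor A
      (∑ j : Fin (nU g), (MvPolynomial.X (g, (i : ℕ), (j : ℕ))) ⊗ₜ[F] (bU g j : A))) ∈ I0 := by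
    intro g i μ
    have h1 : cfT F FF Λ A μ (σ.toLinearMap.rTensor A
      (∑ j : Fin (nU g), (MvPolynomial.X (g, (i : ℕ), (j : ℕ))) ⊗ₜ[F] (bU g j : A))) =
      ∑ a ∈ (l g i).support, if Finsupp.single ((g, (i : ℕ), a) : Λ) 1 = μ then a else 0 := by
      simp only [map_sum, LinearMap.rTensor_tmul, AlgHom.toLinearMap_apply, σ,
        MvPolynomial.aeval_X, hf, cfT_tmul, MvPolynomial.coeff_sum, TensorProduct.sum_tmul,
        MvPolynomial.coeff_monomial]
      rw [Finset.sum_comm]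
      refine Finset.sum_congr rfl fun a ha => ?_
      split_ifs with h
      · exact hκ1 g a (hl1 g i ha).2
      · simp
    rw [h1]
    refine sum_mem fun a ha => ?_
    split_ifs
    · exact (hl1 g i ha).1
    · exact zero_mem _
  -- operators realized in the multiplication algebra and sending `L` into `I`
  let B : NonUnitalSubalgebra F (Module.End FF (FF ⊗[F] A)) :=
    { carrier := {m | (∃ s' ∈ MultAlg F (A := genericAlg F FF 𝒜 nU bU),
          ∀ x : genericAlg F FF 𝒜 nU bU, m (x : FF ⊗[F] A) = (s' x : FF ⊗[F] A)) ∧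
          ∀ v ∈ L, m v ∈ I}
      add_mem' := by
        rintro a b ⟨⟨s1, hs1, h1⟩, ha⟩ ⟨⟨s2, hs2, h2⟩, hb⟩
        exact ⟨⟨s1 + s2, add_mem hs1 hs2, fun x => by
          rw [LinearMap.add_apply, h1, h2]; rfl⟩, fun v hv => I.add_mem (ha v hv) (hb v hv)⟩
      zero_mem' := ⟨⟨0, zero_mem _, fun x => by simp⟩, fun v hv => I.zero_mem⟩
      mul_mem' := by
        rintro a b ⟨⟨s1, hs1, h1⟩, ha⟩ ⟨⟨s2, hs2, h2⟩, hb⟩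
        exact ⟨⟨s1 * s2, mul_mem hs1 hs2, fun x => by
          rw [Module.End.mul_apply, h2, h1]; rfl⟩, fun v hv => ha _ (hIL _ (hb v hv))⟩
      smul_mem' := by
        rintro c a ⟨⟨s1, hs1, h1⟩, ha⟩
        exact ⟨⟨c • s1, SMulMemClass.smul_mem c hs1, fun x => by
          rw [LinearMap.smul_apply, h1]; rfl⟩, fun v hv => I.smul_mem c (ha v hv)⟩ }
  obtain ⟨c, hc, hcB⟩ := central_scalar hinj hA 𝒜 nU bU hspan σ I0 hσ B
    (fun x hx => ⟨⟨_, NonUnitalAlgebra.subset_adjoin F (Or.inl ⟨⟨x, hx.2⟩, rfl⟩), fun y => rfl⟩,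
      fun v hv => hr v hv x hx.1⟩)
    (fun x hx => ⟨⟨_, NonUnitalAlgebra.subset_adjoin F (Or.inr ⟨⟨x, hx.2⟩, rfl⟩), fun y => rfl⟩,
      fun v hv => hl v hv x hx.1⟩) s hs.1 (θ s) (hθ s hs)
  have hσc : σ c ≠ 0 := by
    intro h
    have h1 := hevσ c
    rw [h, map_zero, hc] at h1
    exact hzs h1.symm
  obtain ⟨μ, hμ⟩ := MvPolynomial.ne_zero_iff.mp hσc
  set z := MvPolynomial.coeff μ (σ c) with hz
  obtain ⟨⟨s', hs', hs'z⟩, hzI⟩ := hcB μ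
  rw [← hz] at hs'z hzI
  have hs'v : ∀ x : genericAlg F FF 𝒜 nU bU, (s' x : FF ⊗[F] A) = z • (x : FF ⊗[F] A) :=
    fun x => (hs'z x).symm
  -- `s'` lies in the center and is nonzero
  have hmulz : ∀ (t : Module.End F (genericAlg F FF 𝒜 nU bU))
      (ht : t ∈ MultAlg F (A := genericAlg F FF 𝒜 nU bU)) (y : FF)
      (hty : ∀ x : genericAlg F FF 𝒜 nU bU, (t x : FF ⊗[F] A) = y • (x : FF ⊗[F] A)),
      t ∈ centerMultE F FF 𝒜 (genericAlg F FF 𝒜 nU bU) := by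
    intro t ht y hty
    refine ⟨ht, ?_, ?_⟩
    · intro m' hm'
      obtain ⟨m, -, hmm⟩ := lift_op' (genericAlg F FF 𝒜 nU bU) ⊤
        (fun x hx => trivial) (fun x hx => trivial) m' hm'
      refine LinearMap.ext fun x => Subtype.ext ?_
      rw [Module.End.mul_apply, Module.End.mul_apply, hty, ← hmm, ← hmm, hty, map_smul]
    · intro g x hx
      rw [one_mul]
      change (t x : FF ⊗[F] A) ∈ (𝒜 g).baseChange FF
      rw [hty]
      exact Submodule.smul_mem _ _ hx
  intro v hv
  obtain ⟨t, ht, ht0, x, hx, rfl⟩ := (hLm v).mp hv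
  have htz := hθ0 t ht ht0
  -- `z * θ t` is central
  have hst : ∀ x : genericAlg F FF 𝒜 nU bU,
      ((s' * t) x : FF ⊗[F] A) = (z * θ t) • (x : FF ⊗[F] A) := by
    intro x
    rw [Module.End.mul_apply, hs'v, hθ t ht, smul_smul]
  have hstc := hmulz (s' * t) (mul_mem hs' ht.1) _ hst
  have hzt : z * θ t ≠ 0 := mul_ne_zero hμ htz
  have hst0 : s' * t ≠ 0 := by
    intro h
    have h1 := hst ⟨x0, hx0⟩
    rw [h] at h1
    exact (smul_ne_zero hzt hx00) h1.symm
  have hθst : θ (s' * t) = z * θ t := by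
    have h1 := hst ⟨x0, hx0⟩
    rw [hθ _ hstc] at h1
    exact smul_left_injective FF hx00 h1
  have hv' : (z * θ t)⁻¹ • x ∈ L := (hLm _).mpr ⟨s' * t, hstc, hst0, x, hx, by rw [hθst]⟩
  have h1 := hzI _ hv'
  have h2 : (z • (1 : Module.End FF (FF ⊗[F] A))) ((z * θ t)⁻¹ • x) = (θ t)⁻¹ • x := by
    rw [LinearMap.smul_apply, Module.End.one_apply, smul_smul, mul_inv, ← mul_assoc,
      mul_inv_cancel₀ hμ, one_mul]
  rwa [h2] at h1

end Local

section Descent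

variable {F G FF B : Type*} [Field F] [CommGroup G] [DecidableEq G]
  [Field FF] [Algebra F FF] [NonUnitalNonAssocRing B] [Module F B] [Module FF B]
  [IsScalarTower F FF B] [SMulCommClass FF B B] [IsScalarTower FF B B]
  [SMulCommClass F B B] [IsScalarTower F B B]

/-- The scalars in `FF` preserving `L`. -/
theorem descent_exists_subfield
    (L : NonUnitalSubalgebra F B)
    (P : G → Module.End FF B)
    (hPL : ∀ g, ∀ x ∈ L, P g x ∈ L)
    (hL0 : ∃ x ∈ L, x ≠ 0)
    (hLs : ∀ I : Submodule F B, (∀ x ∈ I, x ∈ L) → (∀ a ∈ L, ∀ x ∈ I, a * x ∈ I) →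
      (∀ a ∈ L, ∀ x ∈ I, x * a ∈ I) → (∀ g, ∀ x ∈ I, P g x ∈ I) → (∃ x ∈ I, x ≠ 0) →
      ∀ v ∈ L, v ∈ I) :
    ∃ K : Subfield FF, ∀ c : FF, c ∈ K ↔ ∀ x ∈ L, c • x ∈ L := by
  refine ⟨{ carrier := {c | ∀ x ∈ L, c • x ∈ L}
            mul_mem' := ?_, one_mem' := ?_, add_mem' := ?_, zero_mem' := ?_, neg_mem' := ?_,
            inv_mem' := ?_ }, fun c => Iff.rfl⟩
  · intro a b ha hb x hx
    rw [mul_smul]; exact ha _ (hb _ hx)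
  · intro x hx; simpa using hx
  · intro a b ha hb x hx
    rw [add_smul]; exact L.add_mem (ha _ hx) (hb _ hx)
  · intro x hx
    rw [zero_smul]; exact L.zero_mem
  · intro a ha x hx
    rw [neg_smul]; exact neg_mem (ha _ hx)
  · intro c hc x hx
    by_cases h0 : c = 0
    · subst h0; rw [inv_zero, zero_smul]; exact L.zero_mem
    let I : Submodule F B :=
      { carrier := {y | ∃ z ∈ L, y = c • z}
        add_mem' := by
          rintro _ _ ⟨z, hz, rfl⟩ ⟨w, hw, rfl⟩
          exact ⟨z + w, L.add_mem hz hw, by rw [smul_add]⟩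
        zero_mem' := ⟨0, L.zero_mem, by simp⟩
        smul_mem' := by
          rintro f _ ⟨z, hz, rfl⟩
          exact ⟨f • z, L.toSubmodule.smul_mem f hz, by rw [smul_comm]⟩ }
    have hx' : x ∈ I := by
      refine hLs I ?_ ?_ ?_ ?_ ?_ x hx
      · rintro _ ⟨z, hz, rfl⟩; exact hc z hz
      · rintro a ha _ ⟨z, hz, rfl⟩; exact ⟨a * z, L.mul_mem ha hz, by rw [mul_smul_comm]⟩
      · rintro a ha _ ⟨z, hz, rfl⟩; exact ⟨z * a, L.mul_mem hz ha, by rw [smul_mul_assoc]⟩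
      · rintro g _ ⟨z, hz, rfl⟩; exact ⟨P g z, hPL g z hz, by rw [map_smul]⟩
      · obtain ⟨z, hz, hz0⟩ := hL0
        exact ⟨c • z, ⟨z, hz, rfl⟩, smul_ne_zero h0 hz0⟩
    obtain ⟨z, hz, rfl⟩ := hx'
    rw [smul_smul, inv_mul_cancel₀ h0, one_smul]; exact hz

theorem descent
    (L : NonUnitalSubalgebra F B) (ℬ : G → Submodule FF B) (ℒ : G → Submodule F ↥L)
    (hsub : ∀ g (x : ↥L), x ∈ ℒ g ↔ (x : B) ∈ ℬ g)
    (P : G → Module.End FF B) (S : Finset G) (hP : GradProj ℬ P S)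
    (hPL : ∀ g, ∀ x ∈ L, P g x ∈ L)
    (hspan : Submodule.span FF (L : Set B) = ⊤)
    (hprod : ∃ a b : B, a * b ≠ 0)
    (hLs : ∀ I : Submodule F B, (∀ x ∈ I, x ∈ L) → (∀ a ∈ L, ∀ x ∈ I, a * x ∈ I) →
      (∀ a ∈ L, ∀ x ∈ I, x * a ∈ I) → (∀ g, ∀ x ∈ I, P g x ∈ I) → (∃ x ∈ I, x ≠ 0) →
      ∀ v ∈ L, v ∈ I)
    (η : Module.End F ↥L → FF)
    (hη : ∀ φ ∈ centroid F (A := ↥L) ⊓ endGrading F ℒ 1,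
      ∀ x : ↥L, ((φ x : ↥L) : B) = η φ • (x : B))
    (n : ℕ) (x : Fin n → ↥L)
    (hx : ∀ c : Fin n → Module.End F ↥L,
        (∀ i, c i ∈ centroid F (A := ↥L) ⊓ endGrading F ℒ 1) →
        ∑ i, (c i) (x i) = 0 → ∀ i, c i = 0)
    (lam : Fin n → FF) (hlam : ∑ i, lam i • ((x i : B)) = 0) : ∀ i, lam i = 0 := by
  classical
  have hab : ∃ a b : ↥L, a * b ≠ 0 := by
    by_contra! hcon
    obtain ⟨a, b, hab⟩ := hprod
    apply hab
    have ha : a ∈ Submodule.span FF (L : Set B) := by rw [hspan]; trivial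
    have hb : b ∈ Submodule.span FF (L : Set B) := by rw [hspan]; trivial
    induction ha using Submodule.span_induction with
    | zero => simp
    | add u v _ _ hu hv =>
      clear hab
      have hu' : u * b = 0 := by_contra fun h => h (hu h)
      have hv' : v * b = 0 := by_contra fun h => h (hv h)
      rw [add_mul, hu', hv', add_zero]
    | smul c u _ hu =>
      have hu' : u * b = 0 := by_contra fun h => h (hu h)
      rw [smul_mul_assoc, hu', smul_zero]
    | mem u hu =>
      clear hab
      induction hb using Submodule.span_induction with
      | zero => simp
      | add v w _ _ hv hw => rw [mul_add, hv, hw, add_zero]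
      | smul c v _ hv => rw [mul_smul_comm, hv, smul_zero]
      | mem v hv =>
        have := congrArg (Subtype.val) (hcon ⟨u, hu⟩ ⟨v, hv⟩)
        simpa using this
  have hne : ∃ w : ↥L, (w : B) ≠ 0 := by
    obtain ⟨a, b, h⟩ := hab
    exact ⟨a * b, fun h' => h (Subtype.ext h')⟩
  obtain ⟨w, hw⟩ := hne
  obtain ⟨K, hK⟩ := descent_exists_subfield L P hPL ⟨w, w.2, hw⟩ hLs
  -- projections on `L`
  let pL : G → Module.End F ↥L := fun g =>
    { toFun := fun x => ⟨P g x, hPL g x x.2⟩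
      map_add' := fun x y => Subtype.ext (by simp)
      map_smul' := fun c x => Subtype.ext (by
        simp only [NonUnitalSubalgebra.coe_smul, RingHom.id_apply]
        rw [← algebraMap_smul FF c (x : B), map_smul, algebraMap_smul]) }
  have hpLv : ∀ g x, ((pL g x : ↥L) : B) = P g x := fun g x => rfl
  have hpL : GradProj ℒ pL S := by
    refine ⟨?_, ?_, ?_, ?_⟩
    · intro g x; rw [hsub]; exact hP.mem g _
    · intro g x hx; apply Subtype.ext; rw [hpLv]; exact hP.self g _ ((hsub g x).1 hx)
    · intro g h x hx hgh; apply Subtype.ext; rw [hpLv]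
      exact hP.other g h _ ((hsub g x).1 hx) hgh
    · intro x; apply Subtype.ext
      rw [← hP.sum (x : B)]
      rw [AddSubmonoidClass.coe_finsetSum]
      rfl
  have hsL : IsGradedSimple F ℒ := by
    refine ⟨hab, fun I hI hIh => ?_⟩
    by_cases hI0 : I = ⊥
    · exact Or.inl hI0
    right
    obtain ⟨y, hy, hy0⟩ := Submodule.exists_mem_ne_zero_of_ne_bot hI0
    let I' : Submodule F B :=
      { carrier := {v | ∃ h : v ∈ L, (⟨v, h⟩ : ↥L) ∈ I}
        add_mem' := by
          rintro a b ⟨ha, ha'⟩ ⟨hb, hb'⟩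
          exact ⟨L.add_mem ha hb, I.add_mem ha' hb'⟩
        zero_mem' := ⟨L.zero_mem, I.zero_mem⟩
        smul_mem' := by
          rintro c a ⟨ha, ha'⟩
          exact ⟨L.toSubmodule.smul_mem c ha, I.smul_mem c ha'⟩ }
    have := hLs I' (fun x hx => hx.1)
      (fun a ha x hx => ⟨L.mul_mem ha hx.1, (hI ⟨a, ha⟩ _ hx.2).1⟩)
      (fun a ha x hx => ⟨L.mul_mem hx.1 ha, (hI ⟨a, ha⟩ _ hx.2).2⟩)
      (fun g x hx => ⟨hPL g x hx.1, hpL.closed I hIh g _ hx.2⟩)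
      ⟨y, ⟨y.2, hy⟩, fun h => hy0 (Subtype.ext h)⟩
    rw [eq_top_iff]
    intro v _
    exact (this v v.2).2
  -- the endomorphism attached to `k ∈ K`
  let E : K → Module.End F ↥L := fun k =>
    { toFun := fun x => ⟨(k : FF) • (x : B), (hK k).1 k.2 x x.2⟩
      map_add' := fun x y => Subtype.ext (by simp)
      map_smul' := fun c x => Subtype.ext (by
        simp only [NonUnitalSubalgebra.coe_smul, RingHom.id_apply]
        rw [smul_comm]) }
  have hEv : ∀ k x, ((E k x : ↥L) : B) = (k : FF) • (x : B) := fun k x => rfl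
  have hE : ∀ k, E k ∈ centroid F (A := ↥L) ⊓ endGrading F ℒ 1 := by
    intro k
    refine ⟨fun a y => ⟨Subtype.ext ?_, Subtype.ext ?_⟩, fun g y hy => ?_⟩
    · rw [hEv]; simp only [NonUnitalSubalgebra.coe_mul, hEv]; rw [mul_smul_comm]
    · rw [hEv]; simp only [NonUnitalSubalgebra.coe_mul, hEv]; rw [smul_mul_assoc]
    · rw [one_mul, hsub, hEv]
      exact (ℬ g).smul_mem _ ((hsub g y).1 hy)
  let e := Module.Basis.ofVectorSpace K FF
  let ev : (Module.Basis.ofVectorSpaceIndex K FF →₀ ↥L) →ₗ[F] B :=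
    Finsupp.lsum F (fun i =>
      { toFun := fun x : ↥L => e i • (x : B)
        map_add' := fun x y => by simp
        map_smul' := fun c x => by
          simp only [NonUnitalSubalgebra.coe_smul, RingHom.id_apply]
          rw [smul_comm] })
  have hev : ∀ m, ev m = m.sum fun i x => e i • (x : B) := by
    intro m; rfl
  -- a map commuting with scalars preserves the kernel
  have hmap : ∀ (f : Module.End F ↥L) (f' : Module.End FF B), (∀ y : ↥L, ((f y : ↥L) : B) = f' y) →
      ∀ m, ev (Finsupp.mapRange.linearMap f m) = f' (ev m) := by
    intro f f' hf m
    rw [hev, hev, Finsupp.mapRange.linearMap_apply, Finsupp.sum_mapRange_index (by simp),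
      map_finsuppSum]
    refine Finsupp.sum_congr fun i _ => ?_
    rw [map_smul, hf]
  have hN : LinearMap.ker ev = ⊥ := by
    by_contra hne
    obtain ⟨m, hm, hm0⟩ := Submodule.exists_mem_ne_zero_of_ne_bot hne
    obtain ⟨φ, hφ, ⟨β, hβ⟩, hall⟩ := key_family hpL hsL (LinearMap.ker ev) ⟨m, hm, hm0⟩
      (fun a m hm => by
        rw [LinearMap.mem_ker] at hm ⊢
        rw [hmap _ (LinearMap.mulLeft FF (a : B)) (fun y => rfl), hm, map_zero])
      (fun a m hm => by
        rw [LinearMap.mem_ker] at hm ⊢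
        rw [hmap _ (LinearMap.mulRight FF (a : B)) (fun y => rfl), hm, map_zero])
      (fun g m hm => by
        rw [LinearMap.mem_ker] at hm ⊢
        rw [hmap _ (P g) (fun y => rfl), hm, map_zero])
    obtain ⟨q, hq, hqi⟩ := hall w
    have hηK : ∀ i, η (φ i) ∈ K := by
      intro i
      rw [hK]
      intro y hy
      rw [← hη (φ i) (hφ i) ⟨y, hy⟩]
      exact (φ i ⟨y, hy⟩).2
    have h1 : η (φ β) = 1 := by
      have := hη (φ β) (hφ β) w
      rw [hβ] at this
      have h2 : (η 1 - 1) • (w : B) = 0 := by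
        rw [sub_smul, ← this]; simp
      rw [hβ]
      exact sub_eq_zero.1 ((smul_eq_zero.1 h2).resolve_right hw)
    rw [LinearMap.mem_ker, hev, Finsupp.sum] at hq
    have h3 : (∑ i ∈ q.support, e i * η (φ i)) • (w : B) = 0 := by
      rw [Finset.sum_smul, ← hq]
      refine Finset.sum_congr rfl fun i _ => ?_
      rw [hqi, hη _ (hφ i), smul_smul]
    have h4 := (smul_eq_zero.1 h3).resolve_right hw
    have hβs : β ∈ q.support := by
      rw [Finsupp.mem_support_iff, hqi, hβ]
      intro h; apply hw; simpa using congrArg Subtype.val h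
    have h5 := linearIndependent_iff'.1 e.linearIndependent q.support
      (fun i => (⟨η (φ i), hηK i⟩ : K)) (by
        rw [← h4]
        refine Finset.sum_congr rfl fun i _ => ?_
        rw [Subfield.smul_def, smul_eq_mul, mul_comm]) β hβs
    have h6 : η (φ β) = 0 := congrArg Subtype.val h5
    rw [h1] at h6
    exact one_ne_zero h6
  -- conclusion
  let T : Finset (Module.Basis.ofVectorSpaceIndex K FF) :=
    Finset.univ.biUnion fun i => (e.repr (lam i)).support
  have hexp : ∀ i, lam i = ∑ α ∈ T, (e.repr (lam i) α : FF) * e α := by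
    intro i
    conv_lhs => rw [← e.linearCombination_repr (lam i)]
    rw [Finsupp.linearCombination_apply, Finsupp.sum_of_support_subset (s := T)]
    · rfl
    · exact Finset.subset_biUnion_of_mem (fun i => (e.repr (lam i)).support) (Finset.mem_univ i)
    · simp
  let m : Module.Basis.ofVectorSpaceIndex K FF →₀ ↥L :=
    ∑ α ∈ T, Finsupp.single α (∑ i, E (e.repr (lam i) α) (x i))
  have hm : m ∈ LinearMap.ker ev := by
    rw [LinearMap.mem_ker, map_sum, ← hlam]
    have : ∀ i, lam i • (x i : B) = ∑ α ∈ T, ((e.repr (lam i) α : FF) * e α) • (x i : B) := by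
      intro i
      rw [← Finset.sum_smul, ← hexp]
    rw [Finset.sum_congr rfl fun i _ => this i, Finset.sum_comm]
    refine Finset.sum_congr rfl fun α _ => ?_
    rw [hev, Finsupp.sum_single_index (by simp), AddSubmonoidClass.coe_finsetSum,
      Finset.smul_sum]
    refine Finset.sum_congr rfl fun i _ => ?_
    rw [hEv, smul_smul, mul_comm]
  rw [hN, Submodule.mem_bot] at hm
  intro i
  rw [hexp i]
  refine Finset.sum_eq_zero fun α hα => ?_
  have h7 : ∑ i, E (e.repr (lam i) α) (x i) = 0 := by
    have := DFunLike.congr_fun hm α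
    simp only [m, Finsupp.finsetSum_apply, Finsupp.single_apply] at this
    rw [Finset.sum_ite_eq' T α] at this
    simpa [hα] using this
  have h8 := hx (fun i => E (e.repr (lam i) α)) (fun i => hE _) h7 i
  have h9 : ((e.repr (lam i) α : FF)) • (w : B) = 0 := by
    rw [← hEv, h8]; rfl
  rw [(smul_eq_zero.1 h9).resolve_right hw, zero_mul]

end Descent

/-- Generic-elements setup: the map `FF ⊗_{K_U} (S_U⁻¹F_U) → Ũ`, `λ̃ ⊗ x ↦ λ̃ • x`, is an
isomorphism of `G`-graded algebras.  (Bijectivity of this canonical map is expressed by: `FF`-span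
of `L = S_U⁻¹F_U` is all of `Ũ`, and every family of elements of `L` that is linearly independent
over `K_U = Γ(L)_e` remains linearly independent over `FF` in `Ũ`; multiplicativity and
gradedness of the canonical map are automatic.) -/
theorem base_change_of_localization_is_iso
    {F : Type*} [Field F] {G : Type*} [CommGroup G] [DecidableEq G]
    {FF : Type*} [Field FF] [Algebra F FF] [Algebra (MvPolynomial (G × ℕ × ℕ) F) FF]
    [IsScalarTower F (MvPolynomial (G × ℕ × ℕ) F) FF]
    (hinj : Function.Injective (algebraMap (MvPolynomial (G × ℕ × ℕ) F) FF))
    {A : Type*} [NonUnitalNonAssocRing A] [Module F A] [SMulCommClass F A A]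
    [IsScalarTower F A A] [FiniteDimensional F A]
    (𝒜 : G → Submodule F A) (hgr : IsAlgGrading F 𝒜) (hsimp : IsGradedSimple F 𝒜)
    (hbase : ∀ φ : Module.End F A,
      φ ∈ centroid F (A := A) ⊓ endGrading F 𝒜 1 ↔ ∃ c : F, φ = c • (1 : Module.End F A))
    (nU : G → ℕ) (bU : ∀ g : G, Module.Basis (Fin (nU g)) F (𝒜 g))
    (θ : Module.End F ↥(genericAlg F FF 𝒜 nU bU) → FF)
    (hθ : ∀ s ∈ centerMultE F FF 𝒜 (genericAlg F FF 𝒜 nU bU),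
      ∀ x : ↥(genericAlg F FF 𝒜 nU bU), ((s x : ↥(genericAlg F FF 𝒜 nU bU)) : FF ⊗[F] A) =
        θ s • (x : FF ⊗[F] A))
    -- `L` is the central localization `S_U⁻¹ F_U`, as a subalgebra of `Ũ`
    (L : NonUnitalSubalgebra F (FF ⊗[F] A))
    (hL : (L : Set (FF ⊗[F] A)) =
      {y | ∃ s ∈ centerMultE F FF 𝒜 (genericAlg F FF 𝒜 nU bU), s ≠ 0 ∧
        ∃ x ∈ genericAlg F FF 𝒜 nU bU, y = (θ s)⁻¹ • x})
    -- `η` identifies `K_U = Γ(L)_e` with a subfield of `FF`, acting on `L` by scalars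
    (η : Module.End F ↥L → FF)
    (hη : ∀ φ ∈ centroid F (A := ↥L) ⊓ endGrading F (subComp F FF 𝒜 L) 1,
      ∀ x : ↥L, ((φ x : ↥L) : FF ⊗[F] A) = η φ • (x : FF ⊗[F] A)) :
    -- surjectivity of `λ̃ ⊗ x ↦ λ̃ • x`: the `FF`-span of `L` is `Ũ`
    (Submodule.span FF (L : Set (FF ⊗[F] A)) = ⊤) ∧
    -- injectivity: a `K_U`-independent family of `L` is `FF`-independent in `Ũ`
    (∀ (n : ℕ) (x : Fin n → ↥L),
      (∀ c : Fin n → Module.End F ↥L,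
        (∀ i, c i ∈ centroid F (A := ↥L) ⊓ endGrading F (subComp F FF 𝒜 L) 1) →
        ∑ i, (c i) (x i) = 0 → ∀ i, c i = 0) →
      ∀ lam : Fin n → FF, ∑ i, lam i • ((x i : FF ⊗[F] A)) = 0 → ∀ i, lam i = 0) := by
  classical
  obtain ⟨p, S, hp⟩ := exists_gradProj 𝒜 hgr.1
  have hspan : Submodule.span FF (genericAlg F FF 𝒜 nU bU : Set (FF ⊗[F] A)) = ⊤ := by
    rw [eq_top_iff, ← span_generic hinj hp nU bU]
    exact Submodule.span_mono (NonUnitalAlgebra.subset_adjoin F)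
  have hθ0 : ∀ s ∈ centerMultE F FF 𝒜 (genericAlg F FF 𝒜 nU bU), s ≠ 0 → θ s ≠ 0 := by
    intro s hs h0 h
    apply h0
    ext1 x
    apply Subtype.ext
    rw [hθ s hs x, h, zero_smul]
    rfl
  have hmemL : ∀ y, y ∈ L ↔ ∃ s ∈ centerMultE F FF 𝒜 (genericAlg F FF 𝒜 nU bU), s ≠ 0 ∧
        ∃ x ∈ genericAlg F FF 𝒜 nU bU, y = (θ s)⁻¹ • x := by
    intro y
    rw [← SetLike.mem_coe, hL]
    rfl
  have hUL : ∀ x ∈ genericAlg F FF 𝒜 nU bU, x ∈ L := by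
    intro x hx
    obtain ⟨s, hs, hs0, -⟩ := (hmemL 0).1 L.zero_mem
    rw [hmemL]
    refine ⟨s, hs, hs0, θ s • x, ?_, ?_⟩
    · rw [← hθ s hs ⟨x, hx⟩]
      exact (s ⟨x, hx⟩).2
    · rw [smul_smul, inv_mul_cancel₀ (hθ0 s hs hs0), one_smul]
  have hspanL : Submodule.span FF (L : Set (FF ⊗[F] A)) = ⊤ := by
    rw [eq_top_iff, ← hspan]
    exact Submodule.span_mono hUL
  refine ⟨hspanL, fun n x hx lam hlam => ?_⟩
  refine descent L (fun g => (𝒜 g).baseChange FF) (subComp F FF 𝒜 L) (fun g x => Iff.rfl)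
    (fun g => (p g).baseChange FF) S hp.baseChange ?_ hspanL ?_ ?_ η hη n x hx lam hlam
  · intro g y hy
    obtain ⟨s, hs, hs0, x, hx, rfl⟩ := (hmemL y).1 hy
    rw [hmemL]
    exact ⟨s, hs, hs0, _, generic_proj hp hgr.2 nU bU x hx g, by rw [map_smul]⟩
  · obtain ⟨a, b, hab⟩ := hsimp.1
    refine ⟨(1 : FF) ⊗ₜ[F] a, (1 : FF) ⊗ₜ[F] b, ?_⟩
    rw [Algebra.TensorProduct.tmul_mul_tmul, one_mul]
    intro h
    apply hab
    exact (Module.Flat.tensorProduct_mk_injective (R := F) (S := FF) A) (by simpa using h)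
  · intro I hIL hl hr hq hI0
    exact local_simple hinj hp hgr.2 hsimp hbase nU bU hspan θ hθ hθ0 L hUL hL I hIL hl hr hq hI0
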